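/- arXiv:1901.00327 — 2 statements merged into one kernel-verified Lean document; each statement's English description precedes it below -/
import Mathlib

section
/- Let (X,A,T,μ) be an invertible measure-preserving system on a Lebesgue probability space and let F be a generating sub-σ-algebra of A, i.e., the σ-algebra generated by ⋁_{n∈ℤ} T^{-n}F equals A mod μ. Then the Pinsker σ-algebra Π_μ is contained in F^- = ⋁_{n≥1} T^{-n}F (mod μ). -/
open MeasureTheory Filter Topology Set
open scoped symmDiff Classical ENNReal NNReal

section Defs

variable {X : Type*}

/-- The pair `(x, y)` is (positively) asymptotic for `T`. -/
def IsAsymptoticPair [PseudoMetricSpace X] (T : X → X) (x y : X) : Prop :=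
  Tendsto (fun n : ℕ => dist (T^[n] x) (T^[n] y)) atTop (𝓝 0)

/-- Shannon entropy of the finite measurable partition of `X` given by the fibers of a
map `p` into a finite type. -/
noncomputable def partEntropy [MeasurableSpace X] (μ : Measure X) {ι : Type*} [Fintype ι]
    (p : X → ι) : ℝ :=
  ∑ i : ι, Real.negMulLog (μ (p ⁻¹' {i})).toReal

/-- Conditional Shannon entropy `H(P | F)` of the finite partition given by the fibers
of `p` with respect to the sub-σ-algebra `F`:
`H(P|F) = ∑_{A ∈ P} ∫ -E(1_A|F) log E(1_A|F) dμ`. -/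
noncomputable def condPartEntropy [MeasurableSpace X] (μ : Measure X)
    (F : MeasurableSpace X) {ι : Type*} [Fintype ι] (p : X → ι) : ℝ :=
  ∑ i : ι, ∫ x, Real.negMulLog ((μ[(p ⁻¹' {i}).indicator (fun _ => (1 : ℝ)) | F]) x) ∂μ

/-- The σ-algebra `σ(P^-)` generated by the partitions `T^{-n}P`, `n ≥ 1`
(the "past" of the partition given by the fibers of `p`). -/
def partPast (T : X → X) {ι : Type*} (p : X → ι) : MeasurableSpace X :=
  ⨆ n : ℕ, MeasurableSpace.comap (fun x => p (T^[n + 1] x)) ⊤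

/-- The σ-algebra `σ(P^T)` generated by the partitions `T^{-n}P`, `n ∈ ℤ`, where `S = T⁻¹`. -/
def partHull (T S : X → X) {ι : Type*} (p : X → ι) : MeasurableSpace X :=
  ⨆ n : ℕ,
    MeasurableSpace.comap (fun x => p (T^[n] x)) ⊤ ⊔
      MeasurableSpace.comap (fun x => p (S^[n] x)) ⊤

/-- Kolmogorov–Sinai entropy of a finite partition: `h_μ(P, T) = H(P | P^-)`. -/
noncomputable def partKS [MeasurableSpace X] (μ : Measure X) (T : X → X) {ι : Type*}
    [Fintype ι] (p : X → ι) : ℝ :=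
  condPartEntropy μ (partPast T p) p

/-- Kolmogorov–Sinai (measure-theoretic) entropy `h_μ(X, T)` of the system:
the supremum over all finite measurable partitions `P` of `h_μ(P, T)`. -/
noncomputable def ksEntropy [MeasurableSpace X] (μ : Measure X) (T : X → X) : ℝ≥0∞ :=
  ⨆ (k : ℕ) (p : X → Fin k) (_ : Measurable p), ENNReal.ofReal (partKS μ T p)

/-- The Pinsker σ-algebra `Π_μ`: the σ-algebra generated by all finite measurable
partitions with zero Kolmogorov–Sinai entropy. -/
def pinskerAlg [MeasurableSpace X] (μ : Measure X) (T : X → X) : MeasurableSpace X :=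
  ⨆ (k : ℕ) (p : X → Fin k) (_ : Measurable p) (_ : partKS μ T p = 0),
    MeasurableSpace.comap p ⊤

/-- Minimal cardinality of a subcover of `⋁_{i=0}^{n-1} T^{-i} C`, where `C` is a
finite cover of `X`. -/
noncomputable def coverNum (T : X → X) {k : ℕ} (C : Fin k → Set X) (n : ℕ) : ℕ :=
  sInf {m : ℕ | ∃ f : Fin m → Fin n → Fin k,
    (⋃ j : Fin m, ⋂ i : Fin n, T^[(i : ℕ)] ⁻¹' C (f j i)) = Set.univ}

/-- Topological entropy of a finite cover `C`:
`h(C, T) = inf_n (1/n) log N(⋁_{i=0}^{n-1} T^{-i} C) = lim_n (1/n) log N(...)`. -/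
noncomputable def coverEntropyOf (T : X → X) {k : ℕ} (C : Fin k → Set X) : ℝ :=
  ⨅ n : ℕ, Real.log (coverNum T C (n + 1)) / (n + 1)

/-- `(x, y)` is a topological entropy pair: `x ≠ y` and every two-set open cover
`{Uᶜ, Vᶜ}`, where `U` and `V` are disjoint closed neighbourhoods of `x` and `y`,
has positive topological entropy. -/
def IsEntropyPair [TopologicalSpace X] (T : X → X) (x y : X) : Prop :=
  x ≠ y ∧ ∀ U V : Set X, IsClosed U → IsClosed V → U ∈ 𝓝 x → V ∈ 𝓝 y → Disjoint U V →
    0 < coverEntropyOf T ![Uᶜ, Vᶜ]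

/-- `(x, y)` is an entropy pair for the invariant measure `μ`: `x ≠ y` and every two-set
Borel partition `(A, Aᶜ)` with `x ∈ interior A` and `y ∈ interior Aᶜ` has positive
entropy with respect to `T` and `μ`. -/
def IsMuEntropyPair [TopologicalSpace X] [MeasurableSpace X] (T : X → X) (μ : Measure X)
    (x y : X) : Prop :=
  x ≠ y ∧ ∀ A : Set X, MeasurableSet A → x ∈ interior A → y ∈ interior Aᶜ →
    0 < partKS μ T (fun z => if z ∈ A then (0 : Fin 2) else 1)

/-- `ν` is the relatively independent square `μ ⊠_G μ` of `μ` over the sub-σ-algebra `G`: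
it is determined by `ν(A × B) = ∫ E(1_A|G) · E(1_B|G) dμ` for all Borel sets `A`, `B`. -/
def IsCondSquare (G : MeasurableSpace X) [m0 : MeasurableSpace X] (μ : Measure X)
    (ν : Measure (X × X)) : Prop :=
  ∀ A B : Set X, MeasurableSet[m0] A → MeasurableSet[m0] B →
    ν (A ×ˢ B) = ENNReal.ofReal
      (∫ x, (μ[A.indicator (fun _ => (1 : ℝ)) | G]) x *
            (μ[B.indicator (fun _ => (1 : ℝ)) | G]) x ∂μ)

/-- The σ-algebra `m₁` is contained in `m₂` modulo `μ`-null sets. -/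
def SubModNull [MeasurableSpace X] (μ : Measure X) (m₁ m₂ : MeasurableSpace X) : Prop :=
  ∀ A : Set X, MeasurableSet[m₁] A → ∃ B : Set X, MeasurableSet[m₂] B ∧ μ (A ∆ B) = 0

end Defs

section Defs2

variable {X : Type*}

/-- The σ-algebra `F^- = ⋁_{n ≥ 1} T^{-n} F`. -/
def pastAlg (T : X → X) (F : MeasurableSpace X) : MeasurableSpace X :=
  ⨆ n : ℕ, MeasurableSpace.comap (T^[n + 1]) F

/-- The σ-algebra `F^T = ⋁_{n ∈ ℤ} T^{-n} F`, where `S = T⁻¹`. -/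
def hullAlg (T S : X → X) (F : MeasurableSpace X) : MeasurableSpace X :=
  ⨆ n : ℕ, MeasurableSpace.comap (T^[n]) F ⊔ MeasurableSpace.comap (S^[n]) F

/-- `P` is (the σ-algebra of) an *excellent* measurable partition for `(X, μ, T)` (here
`S = T⁻¹`): it is generating (`σ(P^T) = 𝒜` mod `μ`) and it is generated by an increasing
sequence of finite measurable partitions `Pₙ ↑ P` with `H(Pₙ|Pₙ⁻) − H(Pₙ|P⁻) → 0`. -/
def IsExcellentPartition (P : MeasurableSpace X) [m0 : MeasurableSpace X] (μ : Measure X)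
    (T S : X → X) : Prop :=
  P ≤ m0 ∧ SubModNull μ m0 (hullAlg T S P) ∧
  ∃ (m : ℕ → ℕ) (Q : ∀ n : ℕ, X → Fin (m n)),
    (∀ n, Measurable (Q n)) ∧
    Monotone (fun n => MeasurableSpace.comap (Q n) (⊤ : MeasurableSpace (Fin (m n)))) ∧
    (⨆ n : ℕ, MeasurableSpace.comap (Q n) (⊤ : MeasurableSpace (Fin (m n)))) = P ∧
    Tendsto (fun n => condPartEntropy μ (partPast T (Q n)) (Q n) -
      condPartEntropy μ (pastAlg T P) (Q n)) atTop (𝓝 0)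

end Defs2

lemma aux_real {a b : ℝ} (ha : 0 < a) (hb : 0 < b) (ha2 : a ≤ 2) (hb2 : b ≤ 2) :
    Real.negMulLog a + (a - b) ^ 2 / 8 ≤ Real.negMulLog b + (-Real.log b - 1) * (a - b) := by
  have hs : 0 < √a := Real.sqrt_pos.2 ha
  have ht : 0 < √b := Real.sqrt_pos.2 hb
  obtain ⟨s, hs0, rfl⟩ : ∃ s, 0 < s ∧ a = s ^ 2 := ⟨√a, hs, (Real.sq_sqrt ha.le).symm⟩
  obtain ⟨t, ht0, rfl⟩ : ∃ t, 0 < t ∧ b = t ^ 2 := ⟨√b, ht, (Real.sq_sqrt hb.le).symm⟩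
  have h1 : Real.log (t / s) ≤ t / s - 1 := Real.log_le_sub_one_of_pos (by positivity)
  rw [Real.log_div ht0.ne' hs0.ne'] at h1
  have h2 : s ^ 2 * (Real.log t - Real.log s) ≤ s * t - s ^ 2 := by
    have := mul_le_mul_of_nonneg_left h1 (sq_nonneg s)
    have e : s ^ 2 * (t / s - 1) = s * t - s ^ 2 := by field_simp
    linarith
  have h3 : (s ^ 2 - t ^ 2) ^ 2 ≤ 8 * (s - t) ^ 2 := by
    have : (s + t) ^ 2 ≤ 8 := by nlinarith [sq_nonneg (s - t)]
    have := mul_le_mul_of_nonneg_right this (sq_nonneg (s - t))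
    nlinarith
  simp only [Real.negMulLog, Real.log_pow]
  push_cast
  nlinarith

lemma condExp_ind_bounds {X : Type*} (G : MeasurableSpace X) [m0 : MeasurableSpace X]
    (μ : Measure X) [IsProbabilityMeasure μ] (hG : G ≤ m0) {A : Set X} (hA : MeasurableSet A) :
    ∀ᵐ x ∂μ, (μ[A.indicator (fun _ => (1 : ℝ)) | G]) x ∈ Set.Icc (0 : ℝ) 1 := by
  have hi : Integrable (A.indicator (fun _ => (1 : ℝ))) μ := (integrable_const 1).indicator hA
  have h0 : 0 ≤ᵐ[μ] μ[A.indicator (fun _ => (1 : ℝ)) | G] :=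
    condExp_nonneg (Eventually.of_forall fun x => Set.indicator_nonneg (by simp) x)
  have h1 : μ[A.indicator (fun _ => (1 : ℝ)) | G] ≤ᵐ[μ] μ[(fun _ => (1 : ℝ)) | G] :=
    condExp_mono hi (integrable_const 1)
      (Eventually.of_forall fun x => Set.indicator_le_self' (by simp) x)
  rw [condExp_const hG] at h1
  filter_upwards [h0, h1] with x a b using ⟨a, b⟩

lemma integrable_comp_bdd {X : Type*} [m0 : MeasurableSpace X]
    (μ : Measure X) [IsProbabilityMeasure μ] {u : X → ℝ} (hu : AEStronglyMeasurable u μ)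
    (hb : ∀ᵐ x ∂μ, u x ∈ Set.Icc (0 : ℝ) 1) {φ : ℝ → ℝ} (hφ : Continuous φ) :
    Integrable (fun x => φ (u x)) μ := by
  obtain ⟨C, hC⟩ := (isCompact_Icc (a := (0:ℝ)) (b := 1)).exists_bound_of_continuousOn
    hφ.continuousOn
  exact Integrable.of_bound (hφ.comp_aestronglyMeasurable hu) C
    (hb.mono fun x hx => hC _ hx)

/-- Dominated convergence for continuous functions of a `[0,1]`-valued sequence. -/
lemma tendsto_integral_shift {X : Type*} [m0 : MeasurableSpace X]
    (μ : Measure X) [IsProbabilityMeasure μ] {u : X → ℝ} (hu : AEStronglyMeasurable u μ)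
    (hb : ∀ᵐ x ∂μ, u x ∈ Set.Icc (0 : ℝ) 1) :
    Tendsto (fun n : ℕ => ∫ x, Real.negMulLog (u x + 1 / ((n : ℝ) + 1)) ∂μ) atTop
      (𝓝 (∫ x, Real.negMulLog (u x) ∂μ)) := by
  obtain ⟨C, hC⟩ := (isCompact_Icc (a := (0:ℝ)) (b := 2)).exists_bound_of_continuousOn
    Real.continuous_negMulLog.continuousOn
  refine tendsto_integral_of_dominated_convergence (fun _ => C) (fun n => ?_)
    (integrable_const C) (fun n => ?_) ?_
  · exact Real.continuous_negMulLog.comp_aestronglyMeasurable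
      (hu.add aestronglyMeasurable_const)
  · filter_upwards [hb] with x hx
    have h1 : 0 < 1 / ((n : ℝ) + 1) := by positivity
    have h2 : 1 / ((n : ℝ) + 1) ≤ 1 := by
      rw [div_le_one (by positivity)]; linarith [(Nat.cast_nonneg n : (0:ℝ) ≤ n)]
    exact hC _ ⟨by linarith [hx.1], by linarith [hx.2]⟩
  · refine Eventually.of_forall fun x => ?_
    refine (Real.continuous_negMulLog.tendsto _).comp ?_
    simpa using (tendsto_one_div_add_atTop_nhds_zero_nat (𝕜 := ℝ)).const_add (u x)

lemma jensen_quant {X : Type*} (G G' : MeasurableSpace X) [m0 : MeasurableSpace X]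
    (μ : Measure X) [IsProbabilityMeasure μ] (hGG : G ≤ G') (hG' : G' ≤ m0) {A : Set X}
    (hA : MeasurableSet A) :
    ∫ x, Real.negMulLog ((μ[A.indicator (fun _ => (1 : ℝ)) | G']) x) ∂μ +
      (∫ x, ((μ[A.indicator (fun _ => (1 : ℝ)) | G']) x -
        (μ[A.indicator (fun _ => (1 : ℝ)) | G]) x) ^ 2 ∂μ) / 8 ≤
    ∫ x, Real.negMulLog ((μ[A.indicator (fun _ => (1 : ℝ)) | G]) x) ∂μ := by
  have hG : G ≤ m0 := hGG.trans hG'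
  have ub := condExp_ind_bounds G' μ hG' hA
  have vb := condExp_ind_bounds G μ hG hA
  have huv : μ[μ[A.indicator (fun _ => (1 : ℝ)) | G'] | G] =ᵐ[μ]
      μ[A.indicator (fun _ => (1 : ℝ)) | G] := condExp_condExp_of_le hGG hG'
  have um : StronglyMeasurable (μ[A.indicator (fun _ => (1 : ℝ)) | G']) :=
    stronglyMeasurable_condExp.mono hG'
  have vm' : StronglyMeasurable[G] (μ[A.indicator (fun _ => (1 : ℝ)) | G]) :=
    stronglyMeasurable_condExp
  have vm := vm'.mono hG
  set u := μ[A.indicator (fun _ => (1 : ℝ)) | G'] with hu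
  set v := μ[A.indicator (fun _ => (1 : ℝ)) | G] with hv
  have ui : Integrable u μ := integrable_condExp
  have vi : Integrable v μ := integrable_condExp
  have sqi : Integrable (fun x => (u x - v x) ^ 2 / 8) μ := by
    refine Integrable.of_bound ((((um.sub vm).pow 2).measurable.div_const 8).aestronglyMeasurable) 1 ?_
    filter_upwards [ub, vb] with x h1 h2
    rw [Real.norm_of_nonneg (by positivity)]
    have := h1.1; have := h1.2; have := h2.1; have := h2.2
    nlinarith
  have key : ∀ n : ℕ, ∫ x, Real.negMulLog (u x + 1 / ((n : ℝ) + 1)) ∂μ +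
      (∫ x, (u x - v x) ^ 2 ∂μ) / 8 ≤ ∫ x, Real.negMulLog (v x + 1 / ((n : ℝ) + 1)) ∂μ := by
    intro n
    have h1 : 0 < 1 / ((n : ℝ) + 1) := by positivity
    have h2 : 1 / ((n : ℝ) + 1) ≤ 1 := by
      rw [div_le_one (by positivity)]; linarith [(Nat.cast_nonneg n : (0:ℝ) ≤ n)]
    set δ := 1 / ((n : ℝ) + 1)
    have iu : Integrable (fun x => Real.negMulLog (u x + δ)) μ :=
      integrable_comp_bdd μ um.aestronglyMeasurable ub
        (φ := fun y => Real.negMulLog (y + δ)) (by fun_prop)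
    have iv : Integrable (fun x => Real.negMulLog (v x + δ)) μ :=
      integrable_comp_bdd μ vm.aestronglyMeasurable vb
        (φ := fun y => Real.negMulLog (y + δ)) (by fun_prop)
    let g : X → ℝ := fun x => -Real.log (v x + δ) - 1
    have gm' : StronglyMeasurable[G] g := by
      refine Measurable.stronglyMeasurable ?_
      exact ((Real.measurable_log.comp (vm'.measurable.add_const δ)).neg).sub_const 1
    have gm := gm'.mono hG
    obtain ⟨C, hC⟩ := (isCompact_Icc (a := (0:ℝ)) (b := 1)).exists_bound_of_continuousOn
      (f := fun y => -Real.log (y + δ) - 1) (by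
        refine ContinuousOn.sub (ContinuousOn.neg (ContinuousOn.log (by fun_prop) ?_)) (by fun_prop)
        intro x hx; have := hx.1; positivity)
    have gb : ∀ᵐ x ∂μ, ‖g x‖ ≤ C := vb.mono fun x hx => hC _ hx
    have giu : Integrable (g * u) μ := ui.bdd_mul gm.aestronglyMeasurable gb
    have giv : Integrable (g * v) μ := vi.bdd_mul gm.aestronglyMeasurable gb
    have e1 : ∫ x, (g * u) x ∂μ = ∫ x, (g * v) x ∂μ := by
      rw [← integral_condExp hG]
      refine integral_congr_ae ?_
      refine (condExp_mul_of_stronglyMeasurable_left gm' giu ui).trans ?_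
      filter_upwards [huv] with x hx
      simp [hx]
    have hle : ∫ x, (Real.negMulLog (u x + δ) + (u x - v x) ^ 2 / 8) ∂μ ≤
        ∫ x, (Real.negMulLog (v x + δ) + ((g * u) x - (g * v) x)) ∂μ := by
      refine integral_mono_ae (iu.add sqi) (iv.add (giu.sub giv)) ?_
      filter_upwards [ub, vb] with x hx hy
      have := aux_real (a := u x + δ) (b := v x + δ) (by linarith [hx.1]) (by linarith [hy.1])
        (by linarith [hx.2]) (by linarith [hy.2])
      simp only [Pi.mul_apply, g]
      ring_nf at this ⊢
      linarith
    rw [integral_add iu sqi,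
      integral_add (g := fun x => (g * u) x - (g * v) x) iv (giu.sub giv), integral_sub giu giv, e1, sub_self,
      add_zero, integral_div] at hle
    exact hle
  exact le_of_tendsto_of_tendsto'
    ((tendsto_integral_shift μ um.aestronglyMeasurable ub).add_const _)
    (tendsto_integral_shift μ vm.aestronglyMeasurable vb) key

lemma ae_eq_of_sq {X : Type*} [m0 : MeasurableSpace X]
    (μ : Measure X) [IsProbabilityMeasure μ] {u v : X → ℝ} (um : AEStronglyMeasurable u μ)
    (vm : AEStronglyMeasurable v μ) (ub : ∀ᵐ x ∂μ, u x ∈ Set.Icc (0 : ℝ) 1)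
    (vb : ∀ᵐ x ∂μ, v x ∈ Set.Icc (0 : ℝ) 1)
    (h : ∫ x, (u x - v x) ^ 2 ∂μ ≤ 0) : u =ᵐ[μ] v := by
  have sqi : Integrable (fun x => (u x - v x) ^ 2) μ := by
    refine Integrable.of_bound ((um.sub vm).pow 2) 1 ?_
    filter_upwards [ub, vb] with x h1 h2
    rw [Real.norm_of_nonneg (by positivity)]
    have := h1.1; have := h1.2; have := h2.1; have := h2.2
    nlinarith
  have h0 : ∫ x, (u x - v x) ^ 2 ∂μ = 0 := le_antisymm h (integral_nonneg fun x => sq_nonneg _)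
  rw [integral_eq_zero_iff_of_nonneg (fun x => sq_nonneg _) sqi] at h0
  filter_upwards [h0] with x hx
  have : (u x - v x) ^ 2 = 0 := hx
  exact sub_eq_zero.1 (pow_eq_zero_iff (two_ne_zero) |>.1 this)

lemma negMulLog_sum_le {γ : Type*} (s : Finset γ) (m : γ → ℝ) (hm : ∀ c ∈ s, 0 ≤ m c) :
    Real.negMulLog (∑ c ∈ s, m c) ≤ ∑ c ∈ s, Real.negMulLog (m c) := by
  rw [Real.negMulLog, neg_mul, Finset.sum_mul, ← Finset.sum_neg_distrib]
  refine Finset.sum_le_sum fun c hc => ?_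
  rw [Real.negMulLog, neg_mul, neg_le_neg_iff]
  rcases (hm c hc).eq_or_lt with h | h
  · simp [← h]
  · exact mul_le_mul_of_nonneg_left
      (Real.log_le_log h (Finset.single_le_sum hm hc)) h.le

lemma integral_comp_finite {X : Type*} [m0 : MeasurableSpace X] (μ : Measure X)
    [IsFiniteMeasure μ] {β : Type*} [Fintype β] {b : X → β}
    (hb : ∀ s, MeasurableSet (b ⁻¹' s)) (f : β → ℝ) :
    ∫ x, f (b x) ∂μ = ∑ j, μ.real (b ⁻¹' {j}) * f j := by
  have e : (fun x => f (b x)) = fun x => ∑ j, (b ⁻¹' {j}).indicator (fun _ => f j) x := by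
    funext x
    rw [Finset.sum_eq_single (b x)]
    · simp
    · intro j _ hj
      exact Set.indicator_of_notMem (by simpa using hj.symm) _
    · simp
  rw [e, integral_finsetSum]
  · refine Finset.sum_congr rfl fun j _ => ?_
    rw [integral_indicator (hb _)]
    simp
  · exact fun j _ => (integrable_const _).indicator (hb _)

lemma integrable_comp_finite {X : Type*} [m0 : MeasurableSpace X] (μ : Measure X)
    [IsFiniteMeasure μ] {β : Type*} [Fintype β] {b : X → β}
    (hb : ∀ s, MeasurableSet (b ⁻¹' s)) (f : β → ℝ) : Integrable (fun x => f (b x)) μ := by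
  have hm : Measurable (fun x => f (b x)) := fun s _ => hb (f ⁻¹' s)
  refine Integrable.of_bound hm.aestronglyMeasurable (∑ j, ‖f j‖) (Eventually.of_forall fun x => ?_)
  exact Finset.single_le_sum (f := fun j => ‖f j‖) (fun j _ => norm_nonneg _) (Finset.mem_univ (b x))

lemma measureReal_preimage_sum {X : Type*} [m0 : MeasurableSpace X] (μ : Measure X)
    [IsFiniteMeasure μ] {β : Type*} [Fintype β] {b : X → β}
    (hb : ∀ s, MeasurableSet (b ⁻¹' s)) (s : Set β) :
    μ.real (b ⁻¹' s) = ∑ j, if j ∈ s then μ.real (b ⁻¹' {j}) else 0 := by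
  have := integral_comp_finite μ hb (s.indicator (fun _ => (1:ℝ)))
  have e : (fun x => s.indicator (fun _ => (1:ℝ)) (b x)) =
      (b ⁻¹' s).indicator (fun _ => (1:ℝ)) := rfl
  rw [e, integral_indicator (hb s)] at this
  simp only [integral_const, smul_eq_mul, mul_one, MeasurableSet.univ, measureReal_restrict_apply,
    Set.univ_inter] at this
  rw [this]
  refine Finset.sum_congr rfl fun j _ => ?_
  by_cases h : j ∈ s <;> simp [h]

lemma partEntropy_comp_le {X : Type*} [m0 : MeasurableSpace X] (μ : Measure X)
    [IsFiniteMeasure μ] {γ α : Type*} [Fintype γ] [Fintype α] {q : X → γ}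
    (hq : ∀ s, MeasurableSet (q ⁻¹' s)) (f : γ → α) :
    partEntropy μ (fun x => f (q x)) ≤ partEntropy μ q := by
  unfold partEntropy
  rw [← Finset.sum_fiberwise (s := Finset.univ) (g := f)]
  refine Finset.sum_le_sum fun a _ => ?_
  have : (μ ((fun x => f (q x)) ⁻¹' {a})).toReal =
      ∑ c ∈ Finset.univ.filter (fun c => f c = a), (μ (q ⁻¹' {c})).toReal := by
    have := measureReal_preimage_sum μ hq (f ⁻¹' {a})
    rw [Finset.sum_filter]
    exact this
  rw [this]
  exact negMulLog_sum_le _ _ fun _ _ => ENNReal.toReal_nonneg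

lemma condExp_finite {X : Type*} [m0 : MeasurableSpace X] (μ : Measure X)
    [IsProbabilityMeasure μ] {β : Type*} [Fintype β] {b : X → β}
    (hb : ∀ s, MeasurableSet (b ⁻¹' s)) {A : Set X} (hA : MeasurableSet A) :
    μ[A.indicator (fun _ => (1 : ℝ)) | MeasurableSpace.comap b ⊤] =ᵐ[μ]
      fun x => μ.real (A ∩ b ⁻¹' {b x}) / μ.real (b ⁻¹' {b x}) := by
  have hle : MeasurableSpace.comap b ⊤ ≤ m0 := by
    rintro _ ⟨s, -, rfl⟩; exact hb s
  let f : β → ℝ := fun j => μ.real (A ∩ b ⁻¹' {j}) / μ.real (b ⁻¹' {j})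
  refine (ae_eq_condExp_of_forall_setIntegral_eq hle ((integrable_const 1).indicator hA)
    (fun s _ _ => (integrable_comp_finite μ hb f).integrableOn) ?_ ?_).symm
  · rintro _ ⟨s, -, rfl⟩ -
    have h1 : ∫ x in b ⁻¹' s, f (b x) ∂μ = ∫ x, (s.indicator f) (b x) ∂μ := by
      rw [← integral_indicator (hb s)]; rfl
    have h2 : ∫ x in b ⁻¹' s, A.indicator (fun _ => (1:ℝ)) x ∂μ =
        (μ.restrict A).real (b ⁻¹' s) := by
      rw [integral_indicator hA, Measure.restrict_restrict hA]
      simp [measureReal_restrict_apply (hb s), Set.inter_comm]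
    change ∫ x in b ⁻¹' s, f (b x) ∂μ = _
    rw [h1, h2, integral_comp_finite μ hb, measureReal_preimage_sum _ hb]
    refine Finset.sum_congr rfl fun j _ => ?_
    by_cases h : j ∈ s
    · simp only [Set.indicator_of_mem h, if_pos h, f]
      rw [measureReal_restrict_apply (hb _), Set.inter_comm A]
      by_cases h0 : μ.real (b ⁻¹' {j}) = 0
      · rw [h0, zero_mul]
        refine (le_antisymm ?_ measureReal_nonneg).symm
        rw [← h0]; exact measureReal_mono Set.inter_subset_left
      · field_simp
    · simp [h]
  · have hm : Measurable[MeasurableSpace.comap b ⊤] (fun x => f (b x)) :=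
      fun s _ => ⟨f ⁻¹' s, trivial, rfl⟩
    exact hm.stronglyMeasurable.aestronglyMeasurable

lemma chain_rule {X : Type*} [m0 : MeasurableSpace X] (μ : Measure X)
    [IsProbabilityMeasure μ] {α β : Type*} [Fintype α] [Fintype β] {a : X → α} {b : X → β}
    (ha : ∀ s, MeasurableSet (a ⁻¹' s)) (hb : ∀ s, MeasurableSet (b ⁻¹' s)) :
    partEntropy μ (fun x => (a x, b x)) =
      partEntropy μ b + condPartEntropy μ (MeasurableSpace.comap b ⊤) a := by
  have h1 : condPartEntropy μ (MeasurableSpace.comap b ⊤) a = ∑ i, ∑ j, μ.real (b ⁻¹' {j}) *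
      Real.negMulLog (μ.real (a ⁻¹' {i} ∩ b ⁻¹' {j}) / μ.real (b ⁻¹' {j})) := by
    unfold condPartEntropy
    refine Finset.sum_congr rfl fun i _ => ?_
    rw [← integral_comp_finite μ hb (fun j => Real.negMulLog (μ.real (a ⁻¹' {i} ∩ b ⁻¹' {j}) / μ.real (b ⁻¹' {j})))]
    refine integral_congr_ae ?_
    filter_upwards [condExp_finite μ hb (ha {i})] with x hx
    rw [hx]
  rw [h1, Finset.sum_comm]
  unfold partEntropy
  rw [Fintype.sum_prod_type_right, ← Finset.sum_add_distrib]
  refine Finset.sum_congr rfl fun j _ => ?_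
  have hpre : ∀ i, (μ ((fun x => (a x, b x)) ⁻¹' {(i, j)})).toReal =
      μ.real (a ⁻¹' {i} ∩ b ⁻¹' {j}) := by
    intro i
    rw [measureReal_def]
    congr 2
    ext x; simp [Prod.ext_iff]
  simp only [hpre]
  have hM : μ.real (b ⁻¹' {j}) = ∑ i, μ.real (a ⁻¹' {i} ∩ b ⁻¹' {j}) := by
    have := measureReal_preimage_sum (μ.restrict (b ⁻¹' {j})) ha Set.univ
    simpa [measureReal_restrict_apply, ha] using this
  change _ = Real.negMulLog (μ.real (b ⁻¹' {j})) + _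
  by_cases h0 : μ.real (b ⁻¹' {j}) = 0
  · have hz : ∀ i, μ.real (a ⁻¹' {i} ∩ b ⁻¹' {j}) = 0 := fun i =>
      le_antisymm (h0 ▸ measureReal_mono Set.inter_subset_right) measureReal_nonneg
    simp [h0, hz]
  · have hterm : ∀ i, μ.real (b ⁻¹' {j}) *
        Real.negMulLog (μ.real (a ⁻¹' {i} ∩ b ⁻¹' {j}) / μ.real (b ⁻¹' {j})) =
        Real.negMulLog (μ.real (a ⁻¹' {i} ∩ b ⁻¹' {j})) +
          μ.real (a ⁻¹' {i} ∩ b ⁻¹' {j}) * Real.log (μ.real (b ⁻¹' {j})) := by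
      intro i
      by_cases hi : μ.real (a ⁻¹' {i} ∩ b ⁻¹' {j}) = 0
      · simp [hi]
      · rw [Real.negMulLog, Real.log_div hi h0, Real.negMulLog]
        field_simp
        ring
    simp only [hterm]
    rw [Finset.sum_add_distrib, ← Finset.sum_mul, ← hM, Real.negMulLog]
    ring

/-- The block `(Z_1, …, Z_n)`. -/
def pblk {X γ : Type*} (T : X → X) (z : X → γ) (n : ℕ) (x : X) : Fin n → γ :=
  fun i => z (T^[(i : ℕ) + 1] x)

lemma pblk_meas {X γ : Type*} [Fintype γ] (G : MeasurableSpace X) {T : X → X} {z : X → γ}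
    (h : ∀ n s, MeasurableSet[G] ((fun x => z (T^[n + 1] x)) ⁻¹' s)) (n : ℕ)
    (s : Set (Fin n → γ)) : MeasurableSet[G] (pblk T z n ⁻¹' s) := by
  have e : pblk T z n ⁻¹' s = ⋃ c ∈ s, ⋂ i : Fin n, (fun x => z (T^[(i : ℕ) + 1] x)) ⁻¹' {c i} := by
    ext x
    simp only [Set.mem_preimage, Set.mem_iUnion, Set.mem_iInter, Set.mem_singleton_iff, exists_prop]
    constructor
    · intro hx; exact ⟨_, hx, fun i => rfl⟩
    · rintro ⟨c, hc, hi⟩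
      have : pblk T z n x = c := funext hi
      rwa [this]
  rw [e]
  exact MeasurableSet.biUnion s.to_countable fun c _ => MeasurableSet.iInter fun i => h _ _

lemma iterate_meas {X γ : Type*} [m0 : MeasurableSpace X] {T : X → X} (hT : Measurable T)
    {z : X → γ} (hz : ∀ s, MeasurableSet (z ⁻¹' s)) (n : ℕ) (s : Set γ) :
    MeasurableSet ((fun x => z (T^[n] x)) ⁻¹' s) :=
  (hT.iterate n) (hz s)

lemma partPast_le {X γ : Type*} [m0 : MeasurableSpace X] {T : X → X} (hT : Measurable T)
    {z : X → γ} (hz : ∀ s, MeasurableSet (z ⁻¹' s)) : partPast T z ≤ m0 := by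
  refine iSup_le fun n => ?_
  rintro _ ⟨s, -, rfl⟩
  exact iterate_meas hT hz _ s

lemma partPast_set {X γ : Type*} (T : X → X) (z : X → γ) (n : ℕ) (s : Set γ) :
    MeasurableSet[partPast T z] ((fun x => z (T^[n + 1] x)) ⁻¹' s) :=
  (le_iSup (fun n : ℕ => MeasurableSpace.comap (fun x => z (T^[n + 1] x)) ⊤) n) _ ⟨s, trivial, rfl⟩

/-- The filtration of the blocks. -/
def pblkFil {X γ : Type*} [Fintype γ] [m0 : MeasurableSpace X] {T : X → X} (hT : Measurable T)
    {z : X → γ} (hz : ∀ s, MeasurableSet (z ⁻¹' s)) : Filtration ℕ m0 where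
  seq n := MeasurableSpace.comap (pblk T z n) ⊤
  mono' := by
    refine monotone_nat_of_le_succ fun n => ?_
    rintro _ ⟨s, -, rfl⟩
    exact ⟨(fun c : Fin (n + 1) → γ => fun i : Fin n => c i.castSucc) ⁻¹' s, trivial, rfl⟩
  le' n := by
    rintro _ ⟨s, -, rfl⟩
    exact pblk_meas _ (fun n s => iterate_meas hT hz _ s) n s

lemma pblkFil_iSup {X γ : Type*} [Fintype γ] [m0 : MeasurableSpace X] {T : X → X}
    (hT : Measurable T) {z : X → γ} (hz : ∀ s, MeasurableSet (z ⁻¹' s)) :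
    ⨆ n, pblkFil hT hz n = partPast T z := by
  apply le_antisymm
  · refine iSup_le fun n => ?_
    rintro _ ⟨s, -, rfl⟩
    exact pblk_meas _ (partPast_set T z) n s
  · refine iSup_le fun n => ?_
    rintro _ ⟨s, -, rfl⟩
    refine (le_iSup (fun n => pblkFil hT hz n) (n + 1)) _ ?_
    exact ⟨{c | c (Fin.last n) ∈ s}, trivial, rfl⟩

lemma condPartEntropy_tendsto {X γ : Type*} [Fintype γ] [m0 : MeasurableSpace X] (μ : Measure X)
    [IsProbabilityMeasure μ] (ℱ : Filtration ℕ m0) {z : X → γ}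
    (hz : ∀ s, MeasurableSet (z ⁻¹' s)) :
    Tendsto (fun n => condPartEntropy μ (ℱ n) z) atTop
      (𝓝 (condPartEntropy μ (⨆ n, ℱ n) z)) := by
  unfold condPartEntropy
  refine tendsto_finsetSum _ fun i _ => ?_
  obtain ⟨C, hC⟩ := (isCompact_Icc (a := (0:ℝ)) (b := 1)).exists_bound_of_continuousOn
    Real.continuous_negMulLog.continuousOn
  refine tendsto_integral_of_dominated_convergence (fun _ => C) (fun n => ?_)
    (integrable_const C) (fun n => ?_) ?_
  · exact Real.continuous_negMulLog.comp_aestronglyMeasurable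
      (stronglyMeasurable_condExp.mono (ℱ.le n)).aestronglyMeasurable
  · filter_upwards [condExp_ind_bounds (ℱ n) μ (ℱ.le n) (hz {i})] with x hx using hC _ hx
  · filter_upwards [tendsto_ae_condExp (μ := μ) (ℱ := ℱ)
      ((z ⁻¹' {i}).indicator (fun _ => (1 : ℝ)))] with x hx
    exact (Real.continuous_negMulLog.tendsto _).comp hx

lemma partEntropy_comp_mp {X γ : Type*} [Fintype γ] [m0 : MeasurableSpace X] (μ : Measure X)
    {T : X → X} (hT : MeasurePreserving T μ μ) {z : X → γ}
    (hz : ∀ s, MeasurableSet (z ⁻¹' s)) :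
    partEntropy μ (fun x => z (T x)) = partEntropy μ z := by
  unfold partEntropy
  refine Finset.sum_congr rfl fun i _ => ?_
  have : (fun x => z (T x)) ⁻¹' {i} = T ⁻¹' (z ⁻¹' {i}) := rfl
  rw [this, hT.measure_preimage (hz _).nullMeasurableSet]

lemma partEntropy_pblk_succ {X γ : Type*} [Fintype γ] [m0 : MeasurableSpace X] (μ : Measure X)
    [IsProbabilityMeasure μ] {T : X → X} (hT : MeasurePreserving T μ μ) {z : X → γ}
    (hz : ∀ s, MeasurableSet (z ⁻¹' s)) (n : ℕ) :
    partEntropy μ (pblk T z (n + 1)) = partEntropy μ (pblk T z n) +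
      condPartEntropy μ (pblkFil hT.measurable hz n) z := by
  have hb : ∀ s, MeasurableSet (pblk T z n ⁻¹' s) :=
    pblk_meas _ (fun n s => iterate_meas hT.measurable hz _ s) n
  have hc := chain_rule μ hz hb
  change _ = _ + condPartEntropy μ (MeasurableSpace.comap (pblk T z n) ⊤) z
  rw [← hc]
  have hpair : ∀ s, MeasurableSet ((fun x => (z x, pblk T z n x)) ⁻¹' s) := by
    intro s
    have e : (fun x => (z x, pblk T z n x)) ⁻¹' s =
        ⋃ c ∈ s, z ⁻¹' {c.1} ∩ pblk T z n ⁻¹' {c.2} := by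
      ext x
      simp only [Set.mem_preimage, Set.mem_iUnion, Set.mem_inter_iff, Set.mem_singleton_iff,
        exists_prop]
      constructor
      · intro hx; exact ⟨_, hx, rfl, rfl⟩
      · rintro ⟨⟨c, d⟩, hc, rfl, rfl⟩; exact hc
    rw [e]
    exact MeasurableSet.biUnion s.to_countable fun c _ => (hz _).inter (hb _)
  have hb1 : ∀ s, MeasurableSet (pblk T z (n + 1) ⁻¹' s) :=
    pblk_meas _ (fun n s => iterate_meas hT.measurable hz _ s) (n + 1)
  rw [← partEntropy_comp_mp μ hT hpair]
  have e1 : pblk T z (n + 1) = fun x => (fun c : γ × (Fin n → γ) =>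
      (Fin.cons c.1 c.2 : Fin (n + 1) → γ)) (z (T x), pblk T z n (T x)) := by
    funext x i
    refine Fin.cases ?_ (fun j => ?_) i
    · simp [pblk]
    · simp [pblk]
  have e2 : (fun x => (z (T x), pblk T z n (T x))) = fun x => (fun c : Fin (n + 1) → γ =>
      (c 0, Fin.tail c)) (pblk T z (n + 1) x) := by
    funext x
    refine Prod.ext rfl ?_
    funext j
    simp [pblk, Fin.tail]
  apply le_antisymm
  · refine (congrArg (partEntropy μ) e1).le.trans ?_
    exact partEntropy_comp_le μ (q := fun x => (z (T x), pblk T z n (T x)))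
      (fun s => hT.measurable (hpair s))
      (fun c : γ × (Fin n → γ) => (Fin.cons c.1 c.2 : Fin (n + 1) → γ))
  · refine (congrArg (partEntropy μ) e2).le.trans ?_
    exact partEntropy_comp_le μ hb1 (fun c : Fin (n + 1) → γ => (c 0, Fin.tail c))

lemma partEntropy_tendsto {X γ : Type*} [Fintype γ] [m0 : MeasurableSpace X] (μ : Measure X)
    [IsProbabilityMeasure μ] {T : X → X} (hT : MeasurePreserving T μ μ) {z : X → γ}
    (hz : ∀ s, MeasurableSet (z ⁻¹' s)) :
    Tendsto (fun n : ℕ => (n⁻¹ : ℝ) * partEntropy μ (pblk T z n)) atTop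
      (𝓝 (partKS μ T z)) := by
  have h := (condPartEntropy_tendsto μ (pblkFil hT.measurable hz) hz).cesaro
  rw [pblkFil_iSup] at h
  refine h.congr fun n => ?_
  congr 1
  induction n with
  | zero =>
    have : pblk T z 0 ⁻¹' {default} = Set.univ := by
      ext x; simp [eq_iff_true_of_subsingleton]
    simp only [Finset.range_zero, Finset.sum_empty, partEntropy, Finset.univ_unique,
      Finset.sum_singleton, this]
    simp
  | succ n ih => rw [Finset.sum_range_succ, ih, partEntropy_pblk_succ μ hT hz]

lemma partKS_comp_le {X γ α : Type*} [Fintype γ] [Fintype α] [m0 : MeasurableSpace X]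
    (μ : Measure X) [IsProbabilityMeasure μ] {T : X → X} (hT : MeasurePreserving T μ μ)
    {z : X → γ} (hz : ∀ s, MeasurableSet (z ⁻¹' s)) (f : γ → α) :
    partKS μ T (fun x => f (z x)) ≤ partKS μ T z := by
  refine le_of_tendsto_of_tendsto'
    (partEntropy_tendsto μ hT (z := fun x => f (z x)) (fun s => hz (f ⁻¹' s)))
    (partEntropy_tendsto μ hT hz) fun n => ?_
  refine mul_le_mul_of_nonneg_left ?_ (by positivity)
  exact partEntropy_comp_le μ (pblk_meas _ (fun n s => iterate_meas hT.measurable hz _ s) n)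
    (fun c : Fin n → γ => fun i => f (c i))

lemma ind_integrable {X : Type*} [m0 : MeasurableSpace X] (μ : Measure X) [IsFiniteMeasure μ]
    {A : Set X} (hA : MeasurableSet A) : Integrable (A.indicator (fun _ => (1 : ℝ))) μ :=
  (integrable_const 1).indicator hA

lemma ind_stronglyMeasurable {X : Type*} (G : MeasurableSpace X) {A : Set X}
    (hA : MeasurableSet[G] A) : StronglyMeasurable[G] (A.indicator (fun _ => (1 : ℝ))) :=
  stronglyMeasurable_const.indicator hA

lemma zero_entropy {X β : Type*} [Fintype β] (G : MeasurableSpace X) [m0 : MeasurableSpace X]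
    (μ : Measure X) [IsProbabilityMeasure μ] (hG : G ≤ m0) {p : X → β}
    (hp : ∀ s, MeasurableSet (p ⁻¹' s)) (h : condPartEntropy μ G p = 0) (j : β) :
    μ[(p ⁻¹' {j}).indicator (fun _ => (1 : ℝ)) | G] =ᵐ[μ]
      (p ⁻¹' {j}).indicator (fun _ => (1 : ℝ)) := by
  have hn : ∀ j ∈ Finset.univ, 0 ≤
      ∫ x, Real.negMulLog ((μ[(p ⁻¹' {j}).indicator (fun _ => (1 : ℝ)) | G]) x) ∂μ := by
    intro j _
    refine integral_nonneg_of_ae ?_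
    filter_upwards [condExp_ind_bounds G μ hG (hp {j})] with x hx
    exact Real.negMulLog_nonneg hx.1 hx.2
  have h0 := (Finset.sum_eq_zero_iff_of_nonneg hn).1 h j (Finset.mem_univ j)
  have hJ := jensen_quant G m0 μ hG le_rfl (hp {j})
  have hb := condExp_ind_bounds m0 μ le_rfl (hp {j})
  have hs : StronglyMeasurable ((p ⁻¹' {j}).indicator (fun _ => (1 : ℝ))) :=
    stronglyMeasurable_const.indicator (hp {j})
  rw [condExp_of_stronglyMeasurable le_rfl hs (ind_integrable μ (hp {j}))] at hJ hb
  have hz : ∀ x, Real.negMulLog ((p ⁻¹' {j}).indicator (fun _ => (1 : ℝ)) x) = 0 := by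
    intro x
    by_cases hx : x ∈ p ⁻¹' {j} <;> simp [Set.indicator, hx]
  simp only [hz, integral_zero, zero_add] at hJ
  rw [h0] at hJ
  refine (ae_eq_of_sq μ hs.aestronglyMeasurable
    (stronglyMeasurable_condExp.mono hG).aestronglyMeasurable hb
    (condExp_ind_bounds G μ hG (hp {j})) (by linarith)).symm

lemma pair_meas {X α β : Type*} [Fintype α] [Fintype β] [m0 : MeasurableSpace X] {q : X → α}
    {p : X → β} (hq : ∀ s, MeasurableSet (q ⁻¹' s)) (hp : ∀ s, MeasurableSet (p ⁻¹' s))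
    (s : Set (α × β)) : MeasurableSet ((fun x => (q x, p x)) ⁻¹' s) := by
  have e : (fun x => (q x, p x)) ⁻¹' s = ⋃ c ∈ s, q ⁻¹' {c.1} ∩ p ⁻¹' {c.2} := by
    ext x
    simp only [Set.mem_preimage, Set.mem_iUnion, Set.mem_inter_iff, Set.mem_singleton_iff,
      exists_prop]
    constructor
    · intro hx; exact ⟨_, hx, rfl, rfl⟩
    · rintro ⟨⟨c, d⟩, hc, rfl, rfl⟩; exact hc
  rw [e]
  exact MeasurableSet.biUnion s.to_countable fun c _ => (hq _).inter (hp _)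

lemma partPast_comp_le {X γ α : Type*} (T : X → X) (z : X → γ) (f : γ → α) :
    partPast T (fun x => f (z x)) ≤ partPast T z := by
  refine iSup_le fun n => ?_
  rintro _ ⟨s, -, rfl⟩
  exact partPast_set T z n (f ⁻¹' s)

lemma condPartEntropy_pair {X α β : Type*} [Fintype α] [Fintype β] (G : MeasurableSpace X)
    [m0 : MeasurableSpace X] (μ : Measure X) [IsProbabilityMeasure μ] (hG : G ≤ m0)
    {q : X → α} {p : X → β}
    (hq : ∀ s, MeasurableSet (q ⁻¹' s)) (hp : ∀ s, MeasurableSet (p ⁻¹' s))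
    (h : ∀ j, ∃ w : X → ℝ, StronglyMeasurable[G] w ∧
      w =ᵐ[μ] (p ⁻¹' {j}).indicator (fun _ => (1 : ℝ))) :
    condPartEntropy μ G (fun x => (q x, p x)) = condPartEntropy μ G q := by
  unfold condPartEntropy
  rw [Fintype.sum_prod_type]
  refine Finset.sum_congr rfl fun i _ => ?_
  have hE : ∀ j, μ[((fun x => (q x, p x)) ⁻¹' {(i, j)}).indicator (fun _ => (1 : ℝ)) | G] =ᵐ[μ]
      fun x => (p ⁻¹' {j}).indicator (fun _ => (1 : ℝ)) x *
        (μ[(q ⁻¹' {i}).indicator (fun _ => (1 : ℝ)) | G]) x := by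
    intro j
    obtain ⟨w, hw, hwe⟩ := h j
    have e1 : ((fun x => (q x, p x)) ⁻¹' {(i, j)}).indicator (fun _ => (1 : ℝ)) =ᵐ[μ]
        w * (q ⁻¹' {i}).indicator (fun _ => (1 : ℝ)) := by
      filter_upwards [hwe] with x hx
      rw [Pi.mul_apply, hx]
      by_cases h1 : q x = i <;> by_cases h2 : p x = j <;> simp [Set.indicator, h1, h2]
    have hint : Integrable (w * (q ⁻¹' {i}).indicator (fun _ => (1 : ℝ))) μ :=
      (ind_integrable μ (pair_meas hq hp _)).congr e1
    refine (condExp_congr_ae e1).trans ?_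
    refine (condExp_mul_of_stronglyMeasurable_left hw hint (ind_integrable μ (hq _))).trans ?_
    filter_upwards [hwe] with x hx
    rw [Pi.mul_apply, hx]
  have hall : ∀ᵐ x ∂μ, ∀ j,
      (μ[((fun x => (q x, p x)) ⁻¹' {(i, j)}).indicator (fun _ => (1 : ℝ)) | G]) x =
      (p ⁻¹' {j}).indicator (fun _ => (1 : ℝ)) x *
        (μ[(q ⁻¹' {i}).indicator (fun _ => (1 : ℝ)) | G]) x := ae_all_iff.2 hE
  rw [← integral_finsetSum]
  · refine integral_congr_ae ?_
    filter_upwards [hall] with x hx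
    simp only [hx]
    rw [Finset.sum_eq_single (p x)]
    · simp
    · intro j _ hj
      simp [Set.indicator, hj.symm]
    · simp
  · intro j _
    exact integrable_comp_bdd μ (stronglyMeasurable_condExp.mono hG).aestronglyMeasurable
      (condExp_ind_bounds G μ hG (pair_meas hq hp _)) Real.continuous_negMulLog

/-- Equality case of monotonicity of conditional entropy. -/
lemma condExp_eq_of_entropy_le {X α : Type*} [Fintype α] (G G' : MeasurableSpace X)
    [m0 : MeasurableSpace X] (μ : Measure X) [IsProbabilityMeasure μ] (hGG : G ≤ G')
    (hG' : G' ≤ m0) {q : X → α} (hq : ∀ s, MeasurableSet (q ⁻¹' s))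
    (h : condPartEntropy μ G q ≤ condPartEntropy μ G' q) (i : α) :
    μ[(q ⁻¹' {i}).indicator (fun _ => (1 : ℝ)) | G'] =ᵐ[μ]
      μ[(q ⁻¹' {i}).indicator (fun _ => (1 : ℝ)) | G] := by
  have hJ := fun i => jensen_quant G G' μ hGG hG' (hq {i})
  have hsum := Finset.sum_le_sum (s := Finset.univ) fun i _ => hJ i
  rw [Finset.sum_add_distrib] at hsum
  unfold condPartEntropy at h
  have h1 := Finset.single_le_sum (s := Finset.univ)
    (f := fun i => (∫ x, ((μ[(q ⁻¹' {i}).indicator (fun _ => (1 : ℝ)) | G']) x -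
        (μ[(q ⁻¹' {i}).indicator (fun _ => (1 : ℝ)) | G]) x) ^ 2 ∂μ) / 8)
    (fun i _ => div_nonneg (integral_nonneg fun x => sq_nonneg _) (by norm_num))
    (Finset.mem_univ i)
  refine ae_eq_of_sq μ (stronglyMeasurable_condExp.mono hG').aestronglyMeasurable
    (stronglyMeasurable_condExp.mono (hGG.trans hG')).aestronglyMeasurable
    (condExp_ind_bounds G' μ hG' (hq {i}))
    (condExp_ind_bounds G μ (hGG.trans hG') (hq {i})) ?_
  simp only at h1
  linarith

lemma sup_structure {X α : Type*} (G : MeasurableSpace X) (q : X → α) {D : Set X}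
    (hD : MeasurableSet[MeasurableSpace.comap q ⊤ ⊔ G] D) (i : α) :
    ∃ C, MeasurableSet[G] C ∧ D ∩ q ⁻¹' {i} = C ∩ q ⁻¹' {i} := by
  let M : MeasurableSpace X :=
    { MeasurableSet' := fun D => ∃ C, MeasurableSet[G] C ∧ D ∩ q ⁻¹' {i} = C ∩ q ⁻¹' {i}
      measurableSet_empty := ⟨∅, MeasurableSet.empty, rfl⟩
      measurableSet_compl := by
        rintro D ⟨C, hC, h⟩
        refine ⟨Cᶜ, hC.compl, ?_⟩
        ext x
        have := Set.ext_iff.1 h x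
        simp only [Set.mem_inter_iff, Set.mem_compl_iff] at this ⊢
        tauto
      measurableSet_iUnion := by
        intro f hf
        choose C hC h using hf
        refine ⟨⋃ n, C n, MeasurableSet.iUnion hC, ?_⟩
        rw [Set.iUnion_inter, Set.iUnion_inter]
        exact Set.iUnion_congr h }
  have hle : MeasurableSpace.comap q ⊤ ⊔ G ≤ M := by
    refine sup_le ?_ fun C hC => ⟨C, hC, rfl⟩
    rintro _ ⟨s, -, rfl⟩
    by_cases hi : i ∈ s
    · refine ⟨Set.univ, @MeasurableSet.univ X G, ?_⟩
      ext x; simp only [Set.mem_inter_iff, Set.mem_preimage, Set.mem_singleton_iff, Set.mem_univ]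
      constructor
      · rintro ⟨_, h⟩; exact ⟨trivial, h⟩
      · rintro ⟨_, h⟩; exact ⟨h ▸ hi, h⟩
    · refine ⟨∅, @MeasurableSet.empty X G, ?_⟩
      ext x; simp only [Set.mem_inter_iff, Set.mem_preimage, Set.mem_singleton_iff,
        Set.mem_empty_iff_false, false_and, iff_false]
      rintro ⟨h1, h2⟩; exact hi (h2 ▸ h1)
  exact hle D hD

/-- Conditional independence: adding `q` to the conditioning does not change `E(1_A | G)`. -/
lemma condExp_add_part {X α : Type*} [Fintype α] (G G' : MeasurableSpace X)
    [m0 : MeasurableSpace X] (μ : Measure X) [IsProbabilityMeasure μ] (hGG : G ≤ G')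
    (hG' : G' ≤ m0) {q : X → α} (hq : ∀ s, MeasurableSet (q ⁻¹' s))
    (h : ∀ i, μ[(q ⁻¹' {i}).indicator (fun _ => (1 : ℝ)) | G'] =ᵐ[μ]
      μ[(q ⁻¹' {i}).indicator (fun _ => (1 : ℝ)) | G])
    {A : Set X} (hA : MeasurableSet A)
    (hw : ∃ w : X → ℝ, StronglyMeasurable[G'] w ∧
      w =ᵐ[μ] A.indicator (fun _ => (1 : ℝ))) :
    μ[A.indicator (fun _ => (1 : ℝ)) | MeasurableSpace.comap q ⊤ ⊔ G] =ᵐ[μ]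
      μ[A.indicator (fun _ => (1 : ℝ)) | G] := by
  obtain ⟨w, hw, hwe⟩ := hw
  have hG : G ≤ m0 := hGG.trans hG'
  have hle : MeasurableSpace.comap q ⊤ ⊔ G ≤ m0 := by
    refine sup_le ?_ hG
    rintro _ ⟨s, -, rfl⟩
    exact hq s
  have hAi := ind_integrable μ hA
  refine (ae_eq_condExp_of_forall_setIntegral_eq hle hAi
    (fun s _ _ => integrable_condExp.integrableOn) ?_ ?_).symm
  swap
  · have hsm : StronglyMeasurable[MeasurableSpace.comap q ⊤ ⊔ G]
        (μ[A.indicator (fun _ => (1 : ℝ)) | G]) :=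
      (stronglyMeasurable_condExp (m := G)).mono le_sup_right
    exact hsm.aestronglyMeasurable
  intro D hD _
  have hDm := hle D hD
  have vb := condExp_ind_bounds G μ hG hA
  have vm : StronglyMeasurable[G] (μ[A.indicator (fun _ => (1 : ℝ)) | G]) :=
    stronglyMeasurable_condExp
  set v := μ[A.indicator (fun _ => (1 : ℝ)) | G] with hv
  have vi : Integrable v μ := integrable_condExp
  have hdec : ∀ f : X → ℝ, Integrable f μ →
      ∫ x in D, f x ∂μ = ∑ i, ∫ x in D ∩ q ⁻¹' {i}, f x ∂μ := by
    intro f hf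
    have : D = ⋃ i, D ∩ q ⁻¹' {i} := by
      ext x; simp
    conv_lhs => rw [this]
    rw [integral_iUnion_fintype (fun i => hDm.inter (hq _))]
    · intro i j hij
      refine Set.disjoint_left.2 ?_
      rintro x ⟨_, h1⟩ ⟨_, h2⟩
      exact hij (h1.symm.trans h2)
    · exact fun i => hf.integrableOn
  rw [hdec v vi, hdec _ hAi]
  refine Finset.sum_congr rfl fun i _ => ?_
  obtain ⟨C, hC, hDC⟩ := sup_structure G q hD i
  rw [hDC]
  have hCm := hG C hC
  set Q := (q ⁻¹' {i}).indicator (fun _ => (1 : ℝ)) with hQ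
  have hQi : Integrable Q μ := ind_integrable μ (hq _)
  have hset : ∀ f : X → ℝ, ∫ x in C ∩ q ⁻¹' {i}, f x ∂μ = ∫ x in C, (f * Q) x ∂μ := by
    intro f
    have e : (f * Q : X → ℝ) = (q ⁻¹' {i}).indicator f := by
      funext x
      by_cases hx : x ∈ q ⁻¹' {i} <;> simp [hQ, Set.indicator_of_mem, Set.indicator_of_notMem, hx]
    rw [e, integral_indicator (hq _), Measure.restrict_restrict (hq _), Set.inter_comm]
  rw [hset, hset]
  have Qb : ∀ x, ‖Q x‖ ≤ 1 := fun x => by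
    by_cases hx : x ∈ q ⁻¹' {i} <;> simp [hQ, hx]
  have Ab : ∀ x, ‖A.indicator (fun _ => (1 : ℝ)) x‖ ≤ 1 := fun x => by
    by_cases hx : x ∈ A <;> simp [Set.indicator, hx]
  have Qm : StronglyMeasurable Q := stronglyMeasurable_const.indicator (hq _)
  have Am : StronglyMeasurable (A.indicator (fun _ => (1 : ℝ))) :=
    stronglyMeasurable_const.indicator hA
  -- left side
  have hvQ : Integrable (v * Q) μ :=
    vi.mul_bdd Qm.aestronglyMeasurable (Eventually.of_forall Qb)
  have hL : ∫ x in C, (v * Q) x ∂μ = ∫ x in C, (v * μ[Q | G]) x ∂μ := by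
    rw [← setIntegral_condExp hG hvQ hC]
    exact integral_congr_ae (ae_restrict_of_ae (condExp_mul_of_stronglyMeasurable_left vm hvQ hQi))
  -- right side
  have hAQ : Integrable (A.indicator (fun _ => (1 : ℝ)) * Q) μ :=
    hAi.mul_bdd Qm.aestronglyMeasurable (Eventually.of_forall Qb)
  have hR1 : ∫ x in C, (A.indicator (fun _ => (1 : ℝ)) * Q) x ∂μ =
      ∫ x in C, (A.indicator (fun _ => (1 : ℝ)) * μ[Q | G]) x ∂μ := by
    have e1 : A.indicator (fun _ => (1 : ℝ)) * Q =ᵐ[μ] w * Q := by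
      filter_upwards [hwe] with x hx
      rw [Pi.mul_apply, Pi.mul_apply, hx]
    rw [← setIntegral_condExp hG' hAQ (hGG C hC)]
    refine integral_congr_ae (ae_restrict_of_ae ?_)
    refine (condExp_congr_ae e1).trans ?_
    refine (condExp_mul_of_stronglyMeasurable_left hw (hAQ.congr e1) hQi).trans ?_
    filter_upwards [hwe, h i] with x h1 h2
    rw [Pi.mul_apply, Pi.mul_apply, h1, h2]
  have hAE : Integrable (A.indicator (fun _ => (1 : ℝ)) * μ[Q | G]) μ :=
    Integrable.bdd_mul integrable_condExp Am.aestronglyMeasurable (Eventually.of_forall Ab)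
  have hR2 : ∫ x in C, (A.indicator (fun _ => (1 : ℝ)) * μ[Q | G]) x ∂μ =
      ∫ x in C, (v * μ[Q | G]) x ∂μ := by
    rw [← setIntegral_condExp hG hAE hC]
    exact integral_congr_ae (ae_restrict_of_ae
      (condExp_mul_of_stronglyMeasurable_right stronglyMeasurable_condExp hAE hAi))
  rw [hL, hR1, hR2]

lemma condExp_comp_equiv {X : Type*} (G : MeasurableSpace X) [m0 : MeasurableSpace X]
    (μ : Measure X) [IsProbabilityMeasure μ] (hG : G ≤ m0) {R : X → X}
    (hR : MeasurePreserving R μ μ) (hRe : MeasurableEmbedding R) {f : X → ℝ}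
    (hf : Integrable f μ) :
    μ[fun x => f (R x) | MeasurableSpace.comap R G] =ᵐ[μ] fun x => (μ[f | G]) (R x) := by
  have hle : MeasurableSpace.comap R G ≤ m0 := by
    rintro _ ⟨s, hs, rfl⟩
    exact hR.measurable (hG s hs)
  have hi : Integrable (fun x => (μ[f | G]) (R x)) μ :=
    (hR.integrable_comp_emb hRe).2 integrable_condExp
  refine (ae_eq_condExp_of_forall_setIntegral_eq hle ((hR.integrable_comp_emb hRe).2 hf)
    (fun s _ _ => hi.integrableOn) ?_ ?_).symm
  · rintro _ ⟨s, hs, rfl⟩ -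
    rw [hR.setIntegral_preimage_emb hRe, setIntegral_condExp hG hf hs]
    exact (hR.setIntegral_preimage_emb hRe f s).symm
  · have : StronglyMeasurable[MeasurableSpace.comap R G] (fun x => (μ[f | G]) (R x)) :=
      stronglyMeasurable_condExp.comp_measurable (comap_measurable R)
    exact this.aestronglyMeasurable

lemma step_shift {X α β : Type*} [Fintype α] [Fintype β] [m0 : MeasurableSpace X]
    (μ : Measure X) [IsProbabilityMeasure μ] {T : X → X} (hT : MeasurePreserving T μ μ)
    {q : X → α} {p : X → β} (hq : ∀ s, MeasurableSet (q ⁻¹' s))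
    (hp : ∀ s, MeasurableSet (p ⁻¹' s)) (h0 : partKS μ T p = 0) (m : ℕ) (j : β) :
    μ[((fun x => p (T^[m] x)) ⁻¹' {j}).indicator (fun _ => (1 : ℝ)) |
        MeasurableSpace.comap q ⊤ ⊔ partPast T q] =ᵐ[μ]
      μ[((fun x => p (T^[m] x)) ⁻¹' {j}).indicator (fun _ => (1 : ℝ)) | partPast T q] := by
  have hz := pair_meas hq hp
  have hle := partPast_le hT.measurable hz
  have hqz : partPast T q ≤ partPast T (fun x => (q x, p x)) :=
    partPast_comp_le T (fun x => (q x, p x)) Prod.fst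
  have hpz : partPast T p ≤ partPast T (fun x => (q x, p x)) :=
    partPast_comp_le T (fun x => (q x, p x)) Prod.snd
  have hw0 : ∀ j, ∃ w : X → ℝ, StronglyMeasurable[partPast T (fun x => (q x, p x))] w ∧
      w =ᵐ[μ] (p ⁻¹' {j}).indicator (fun _ => (1 : ℝ)) := fun j =>
    ⟨_, (stronglyMeasurable_condExp (m := partPast T p)).mono hpz,
      zero_entropy (partPast T p) μ (partPast_le hT.measurable hp) hp h0 j⟩
  have hent : condPartEntropy μ (partPast T q) q ≤
      condPartEntropy μ (partPast T (fun x => (q x, p x))) q := by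
    rw [← condPartEntropy_pair _ μ hle hq hp hw0]
    exact partKS_comp_le μ hT hz Prod.fst
  refine condExp_add_part (partPast T q) (partPast T (fun x => (q x, p x))) μ hqz hle hq
    (condExp_eq_of_entropy_le _ _ μ hqz hle hq hent) (iterate_meas hT.measurable hp m _) ?_
  cases m with
  | zero => exact hw0 j
  | succ m =>
    exact ⟨_, ind_stronglyMeasurable (partPast T (fun x => (q x, p x)))
      (hpz _ (partPast_set T p m {j})), EventuallyEq.rfl⟩

lemma comap_symm_partPast {X α : Type*} (T S : X → X) (hTS : ∀ x, T (S x) = x) (q : X → α) :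
    MeasurableSpace.comap S (partPast T q) = MeasurableSpace.comap q ⊤ ⊔ partPast T q := by
  have e : ∀ n x, T^[n + 1] (S x) = T^[n] x := fun n x => by
    rw [Function.iterate_succ_apply, hTS]
  unfold partPast
  rw [MeasurableSpace.comap_iSup]
  simp only [MeasurableSpace.comap_comp, Function.comp_def, e]
  apply le_antisymm
  · refine iSup_le fun n => ?_
    cases n with
    | zero => exact le_sup_left
    | succ n =>
      exact le_trans (le_iSup (fun n : ℕ =>
        MeasurableSpace.comap (fun x => q (T^[n + 1] x)) ⊤) n) le_sup_right
  · refine sup_le ?_ (iSup_le fun n => ?_)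
    · exact le_iSup (fun n : ℕ => MeasurableSpace.comap (fun x => q (T^[n] x)) ⊤) 0
    · exact le_iSup (fun n : ℕ => MeasurableSpace.comap (fun x => q (T^[n] x)) ⊤) (n + 1)

lemma comap_iterate_succ {X α : Type*} (T S : X → X) (hTS : ∀ x, T (S x) = x) (q : X → α)
    (k : ℕ) : MeasurableSpace.comap (S^[k + 1]) (partPast T q) =
      MeasurableSpace.comap (S^[k]) (MeasurableSpace.comap q ⊤ ⊔ partPast T q) := by
  rw [← comap_symm_partPast T S hTS, MeasurableSpace.comap_comp, ← Function.iterate_succ']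

lemma condExp_hull {X α β : Type*} [Fintype α] [Fintype β] [m0 : MeasurableSpace X]
    (μ : Measure X) [IsProbabilityMeasure μ] (T : X ≃ᵐ X) (hT : MeasurePreserving (⇑T) μ μ)
    {q : X → α} {p : X → β} (hq : ∀ s, MeasurableSet (q ⁻¹' s))
    (hp : ∀ s, MeasurableSet (p ⁻¹' s)) (h0 : partKS μ (⇑T) p = 0) (j : β) (k : ℕ) :
    μ[(p ⁻¹' {j}).indicator (fun _ => (1 : ℝ)) |
        MeasurableSpace.comap ((⇑T.symm)^[k]) (partPast (⇑T) q)] =ᵐ[μ]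
      μ[(p ⁻¹' {j}).indicator (fun _ => (1 : ℝ)) | partPast (⇑T) q] := by
  induction k with
  | zero => simp [MeasurableSpace.comap_id]
  | succ k ih =>
    refine EventuallyEq.trans ?_ ih
    rw [comap_iterate_succ _ _ T.apply_symm_apply]
    have hS : MeasurePreserving (⇑T.symm) μ μ := hT.symm T
    have hSk : MeasurePreserving ((⇑T.symm)^[k]) μ μ := hS.iterate k
    have hSe : MeasurableEmbedding ((⇑T.symm)^[k]) := by
      clear ih hSk
      induction k with
      | zero => exact MeasurableEmbedding.id
      | succ k ih => rw [Function.iterate_succ]; exact ih.comp T.symm.measurableEmbedding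
    have hle := partPast_le hT.measurable hq
    have hle2 : MeasurableSpace.comap q ⊤ ⊔ partPast (⇑T) q ≤ m0 := by
      refine sup_le ?_ hle
      rintro _ ⟨s, -, rfl⟩
      exact hq s
    have hAm := iterate_meas hT.measurable hp k {j}
    have hfi := ind_integrable μ hAm
    have hcancel : ∀ x, (⇑T)^[k] ((⇑T.symm)^[k] x) = x :=
      Function.LeftInverse.iterate (f := ⇑T.symm) (g := ⇑T) T.apply_symm_apply k
    have hfun : (p ⁻¹' {j}).indicator (fun _ => (1 : ℝ)) = fun x =>
        ((fun x => p ((⇑T)^[k] x)) ⁻¹' {j}).indicator (fun _ => (1 : ℝ)) ((⇑T.symm)^[k] x) := by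
      funext x
      simp only [Set.indicator, Set.mem_preimage, hcancel]
    rw [hfun]
    refine (condExp_comp_equiv _ μ hle2 hSk hSe hfi).trans ?_
    refine EventuallyEq.trans ?_ (condExp_comp_equiv _ μ hle hSk hSe hfi).symm
    exact hSk.quasiMeasurePreserving.ae (step_shift μ hT hq hp h0 k j)

lemma countable_reduction {X : Type*} (F : MeasurableSpace X) (T S : X → X) {B : Set X}
    (hB : MeasurableSet[⨆ n : ℕ, MeasurableSpace.comap (T^[n]) F ⊔
      MeasurableSpace.comap (S^[n]) F] B) :
    ∃ C : ℕ → Set X, (∀ n, MeasurableSet[F] (C n)) ∧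
      MeasurableSet[⨆ n : ℕ,
        MeasurableSpace.comap (T^[n]) (MeasurableSpace.generateFrom (Set.range C)) ⊔
        MeasurableSpace.comap (S^[n]) (MeasurableSpace.generateFrom (Set.range C))] B := by
  let hull : MeasurableSpace X → MeasurableSpace X := fun F =>
    ⨆ n : ℕ, MeasurableSpace.comap (T^[n]) F ⊔ MeasurableSpace.comap (S^[n]) F
  have hmono : Monotone hull := fun F F' h => iSup_mono fun n =>
    sup_le_sup (MeasurableSpace.comap_mono h) (MeasurableSpace.comap_mono h)
  let P : Set X → Prop := fun B => ∃ C : ℕ → Set X, (∀ n, MeasurableSet[F] (C n)) ∧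
      MeasurableSet[hull (MeasurableSpace.generateFrom (Set.range C))] B
  have hP0 : P ∅ := ⟨fun _ => ∅, fun _ => @MeasurableSet.empty X F,
    @MeasurableSet.empty X (hull _)⟩
  have hPc : ∀ B, P B → P Bᶜ := fun B ⟨C, h1, h2⟩ => ⟨C, h1, @MeasurableSet.compl X B (hull _) h2⟩
  have hPu : ∀ f : ℕ → Set X, (∀ n, P (f n)) → P (⋃ n, f n) := by
    intro f hf
    choose C h1 h2 using hf
    refine ⟨fun n => C n.unpair.1 n.unpair.2, fun n => h1 _ _, ?_⟩
    refine @MeasurableSet.iUnion X ℕ (hull _) _ f fun n => ?_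
    refine hmono (MeasurableSpace.generateFrom_mono ?_) _ (h2 n)
    rintro _ ⟨i, rfl⟩
    exact ⟨Nat.pair n i, by simp⟩
  let M : MeasurableSpace X := ⟨P, hP0, hPc, hPu⟩
  have hD : ∀ D, MeasurableSet[F] D →
      MeasurableSet[MeasurableSpace.generateFrom (Set.range fun _ : ℕ => D)] D :=
    fun D _ => MeasurableSpace.measurableSet_generateFrom ⟨0, rfl⟩
  have hle : hull F ≤ M := by
    refine iSup_le fun n => sup_le ?_ ?_
    · rintro _ ⟨D, hDF, rfl⟩
      refine ⟨fun _ => D, fun _ => hDF, ?_⟩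
      exact le_trans le_sup_left (le_iSup (fun n : ℕ => MeasurableSpace.comap (T^[n])
        (MeasurableSpace.generateFrom (Set.range fun _ : ℕ => D)) ⊔ MeasurableSpace.comap (S^[n])
        (MeasurableSpace.generateFrom (Set.range fun _ : ℕ => D))) n) _ ⟨D, hD D hDF, rfl⟩
    · rintro _ ⟨D, hDF, rfl⟩
      refine ⟨fun _ => D, fun _ => hDF, ?_⟩
      exact le_trans le_sup_right (le_iSup (fun n : ℕ => MeasurableSpace.comap (T^[n])
        (MeasurableSpace.generateFrom (Set.range fun _ : ℕ => D)) ⊔ MeasurableSpace.comap (S^[n])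
        (MeasurableSpace.generateFrom (Set.range fun _ : ℕ => D))) n) _ ⟨D, hD D hDF, rfl⟩
  exact hle B hB

/-- The finite partition generated by `C 0, …, C (k-1)`. -/
noncomputable def cpart {X : Type*} (C : ℕ → Set X) (k : ℕ) (x : X) : Fin k → Bool :=
  fun i => decide (x ∈ C i)

lemma cpart_meas {X : Type*} (F : MeasurableSpace X) {C : ℕ → Set X}
    (hC : ∀ n, MeasurableSet[F] (C n)) (k : ℕ) (s : Set (Fin k → Bool)) :
    MeasurableSet[F] (cpart C k ⁻¹' s) := by
  have hm : Measurable[F] (cpart C k) := by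
    refine measurable_pi_lambda _ fun i => ?_
    refine measurable_to_bool ?_
    convert hC i using 1
    ext x
    simp [cpart]
  exact hm (Set.to_countable s).measurableSet

lemma pinsker_set {X β : Type*} [Fintype β] (F : MeasurableSpace X) [m0 : MeasurableSpace X]
    (μ : Measure X) [IsProbabilityMeasure μ]
    (T : X ≃ᵐ X) (hT : MeasurePreserving (⇑T) μ μ) (hF : F ≤ m0)
    (hgen : SubModNull μ m0
      (⨆ n : ℕ, MeasurableSpace.comap ((⇑T)^[n]) F ⊔
        MeasurableSpace.comap ((⇑T.symm)^[n]) F))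
    {p : X → β} (hp : ∀ s, MeasurableSet (p ⁻¹' s)) (h0 : partKS μ (⇑T) p = 0) (j : β) :
    ∃ B, MeasurableSet[⨆ n : ℕ, MeasurableSpace.comap ((⇑T)^[n + 1]) F] B ∧
      p ⁻¹' {j} =ᵐ[μ] B := by
  obtain ⟨B, hB, hAB⟩ := hgen _ (hp {j})
  rw [measure_symmDiff_eq_zero_iff] at hAB
  obtain ⟨C, hCF, hBC⟩ := countable_reduction F _ _ hB
  have hq : ∀ k s, MeasurableSet (cpart C k ⁻¹' s) := fun k s => hF _ (cpart_meas F hCF k s)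
  have hGmono : ∀ k, partPast (⇑T) (cpart C k) ≤ partPast (⇑T) (cpart C (k + 1)) := fun k =>
    partPast_comp_le (⇑T) (cpart C (k + 1)) (fun c : Fin (k + 1) → Bool => fun i : Fin k => c i.castSucc)
  let ℱ : Filtration ℕ m0 :=
    { seq := fun k => partPast (⇑T) (cpart C k)
      mono' := monotone_nat_of_le_succ hGmono
      le' := fun k => partPast_le hT.measurable (hq k) }
  let 𝒢 : Filtration ℕ m0 :=
    { seq := fun k => MeasurableSpace.comap ((⇑T.symm)^[k]) (partPast (⇑T) (cpart C k))
      mono' := by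
        refine monotone_nat_of_le_succ fun k => ?_
        rw [comap_iterate_succ _ _ T.apply_symm_apply]
        exact MeasurableSpace.comap_mono ((hGmono k).trans le_sup_right)
      le' := fun k => by
        rintro _ ⟨s, hs, rfl⟩
        exact (T.symm.measurable.iterate k) (partPast_le hT.measurable (hq k) s hs) }
  have hFle : (⨆ k, ℱ k) ≤ ⨆ n : ℕ, MeasurableSpace.comap ((⇑T)^[n + 1]) F := by
    refine iSup_le fun k => iSup_mono fun n => ?_
    rintro _ ⟨s, -, rfl⟩
    exact ⟨cpart C k ⁻¹' s, cpart_meas F hCF k s, rfl⟩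
  have hcancel : ∀ k x, (⇑T)^[k] ((⇑T.symm)^[k] x) = x := fun k =>
    Function.LeftInverse.iterate (f := ⇑T.symm) (g := ⇑T) T.apply_symm_apply k
  have hmem : ∀ i k n, i < k → MeasurableSet[partPast (⇑T) (cpart C k)] ((⇑T)^[n + 1] ⁻¹' C i) := by
    intro i k n hik
    have := partPast_set (⇑T) (cpart C k) n {c | c ⟨i, hik⟩ = true}
    convert this using 1
    ext x
    simp [cpart]
  have hBG : MeasurableSet[⨆ k, 𝒢 k] B := by
    refine (iSup_le fun n => sup_le ?_ ?_ : _ ≤ ⨆ k, 𝒢 k) B hBC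
    · rw [MeasurableSpace.comap_generateFrom]
      refine MeasurableSpace.generateFrom_le ?_
      rintro _ ⟨_, ⟨i, rfl⟩, rfl⟩
      refine (le_iSup (fun k => 𝒢 k) (i + 1)) _ ?_
      refine ⟨_, hmem i (i + 1) (n + i) (by omega), ?_⟩
      ext x
      simp only [Set.mem_preimage]
      rw [add_assoc, Function.iterate_add_apply, hcancel]
    · rw [MeasurableSpace.comap_generateFrom]
      refine MeasurableSpace.generateFrom_le ?_
      rintro _ ⟨_, ⟨i, rfl⟩, rfl⟩
      refine (le_iSup (fun k => 𝒢 k) (i + 1 + n)) _ ?_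
      refine ⟨_, hmem i (i + 1 + n) i (by omega), ?_⟩
      ext x
      simp only [Set.mem_preimage]
      rw [Function.iterate_add_apply _ (i + 1) n, hcancel]
  set f : X → ℝ := (p ⁻¹' {j}).indicator (fun _ => (1 : ℝ)) with hf
  have heq : ∀ᵐ x ∂μ, ∀ k, (μ[f | 𝒢 k]) x = (μ[f | ℱ k]) x :=
    ae_all_iff.2 fun k => condExp_hull μ T hT (hq k) hp h0 j k
  have hlim : μ[f | ⨆ k, 𝒢 k] =ᵐ[μ] μ[f | ⨆ k, ℱ k] := by
    filter_upwards [heq, tendsto_ae_condExp (μ := μ) (ℱ := 𝒢) f,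
      tendsto_ae_condExp (μ := μ) (ℱ := ℱ) f] with x h1 h2 h3
    simp only [h1] at h2
    exact tendsto_nhds_unique h2 h3
  have hGle : (⨆ k, 𝒢 k) ≤ m0 := iSup_le fun k => 𝒢.le k
  have hfB : f =ᵐ[μ] B.indicator (fun _ => (1 : ℝ)) := indicator_ae_eq_of_ae_eq_set hAB
  have hfG : μ[f | ⨆ k, 𝒢 k] =ᵐ[μ] f := by
    refine (condExp_congr_ae hfB).trans ?_
    rw [condExp_of_stronglyMeasurable hGle
      (ind_stronglyMeasurable (⨆ k, 𝒢 k) hBG)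
      (ind_integrable μ (hGle B hBG))]
    exact hfB.symm
  have hfin : f =ᵐ[μ] μ[f | ⨆ k, ℱ k] := hfG.symm.trans hlim
  refine ⟨(μ[f | ⨆ k, ℱ k]) ⁻¹' {1}, hFle _ ?_, ?_⟩
  · exact (stronglyMeasurable_condExp (m := ⨆ k, ℱ k)).measurable (measurableSet_singleton 1)
  · refine Filter.eventuallyEq_set.2 ?_
    filter_upwards [hfin] with x hx
    change x ∈ p ⁻¹' {j} ↔ (μ[f | ⨆ k, ℱ k]) x = 1
    rw [← hx, hf]
    by_cases hxA : x ∈ p ⁻¹' {j}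
    · rw [Set.indicator_of_mem hxA]
      exact ⟨fun _ => rfl, fun _ => hxA⟩
    · rw [Set.indicator_of_notMem hxA]
      exact ⟨fun h => absurd h hxA, fun h => absurd h zero_ne_one⟩

/-- If `F` is a generating sub-σ-algebra of an invertible
measure-preserving system on a Lebesgue (standard Borel) probability space, i.e.
`⋁_{n ∈ ℤ} T^{-n}F = A` mod `μ`, then the Pinsker σ-algebra `Π_μ` is contained in
`F^- = ⋁_{n ≥ 1} T^{-n}F` mod `μ`. -/
theorem pinsker_subset_past_of_generating
    {X : Type*} (F : MeasurableSpace X) [m0 : MeasurableSpace X] [StandardBorelSpace X]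
    (μ : Measure X) [IsProbabilityMeasure μ]
    (T : X ≃ᵐ X) (hT : MeasurePreserving (⇑T) μ μ)
    (hF : F ≤ m0)
    (hgen : SubModNull μ m0
      (⨆ n : ℕ, MeasurableSpace.comap ((⇑T)^[n]) F ⊔
        MeasurableSpace.comap ((⇑T.symm)^[n]) F)) :
    SubModNull μ (pinskerAlg μ (⇑T)) (⨆ n : ℕ, MeasurableSpace.comap ((⇑T)^[n + 1]) F) := by
  have hle : pinskerAlg μ (⇑T) ≤ eventuallyMeasurableSpace
      (⨆ n : ℕ, MeasurableSpace.comap ((⇑T)^[n + 1]) F) (ae μ) := by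
    refine iSup_le fun k => iSup_le fun p => iSup_le fun hp => iSup_le fun h0 => ?_
    rintro _ ⟨s, -, rfl⟩
    have hp' : ∀ s, MeasurableSet (p ⁻¹' s) := fun s => hp (Set.to_countable s).measurableSet
    have e : p ⁻¹' s = ⋃ j ∈ s, p ⁻¹' {j} := by
      ext x; simp
    rw [e]
    refine MeasurableSet.biUnion s.to_countable fun j _ => ?_
    exact pinsker_set F μ T hT hF hgen hp' h0 j
  intro A hA
  obtain ⟨B, hB, hAB⟩ := hle A hA
  exact ⟨B, hB, measure_symmDiff_eq_zero_iff.2 hAB⟩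
end

section
/- Let (X,A,T,μ) be an invertible measure-preserving system on a Lebesgue probability space and let P_1 ≺ P_2 ≺ ⋯ ≺ P_k be finite measurable partitions, each refined by the next. Then: (a) H(P_1 | P_1^-) − H(P_1 | P_2^-) = H(P_2 | P_1 ∨ P_2^-) − H(P_2 | P_1^T ∨ P_2^-); and (b) H(P_1 | P_1^-) − H(P_1 | P_k^-) ≤ Σ_{i=1}^{k-1} ( H(P_i | P_i^-) − H(P_i | P_{i+1}^-) ). -/
open MeasureTheory Filter Topology Set
open scoped symmDiff Classical ENNReal NNReal

section Aux

variable {X : Type*} {F G : MeasurableSpace X} [m0 : MeasurableSpace X] {μ : Measure X} [IsProbabilityMeasure μ]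

/-- indicator function -/
noncomputable abbrev ind1 (s : Set X) : X → ℝ := s.indicator (fun _ => (1 : ℝ))

lemma integrable_ind1 {s : Set X} (hs : MeasurableSet s) : Integrable (ind1 s) μ :=
  (integrable_const (1 : ℝ)).indicator hs

lemma ce_mem (hF : F ≤ m0) {s : Set X} (hs : MeasurableSet s) :
    ∀ᵐ x ∂μ, (μ[ind1 s | F]) x ∈ Icc (0 : ℝ) 1 := by
  refine Convex.condExp_mem hF (integrable_ind1 hs) isClosed_Icc (convex_Icc 0 1) ?_
  refine Eventually.of_forall fun x => ?_
  by_cases h : x ∈ s <;> simp [ind1, h]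

lemma nml_mem {x : ℝ} (h : x ∈ Icc (0 : ℝ) 1) : Real.negMulLog x ∈ Icc (0 : ℝ) 1 :=
  ⟨Real.negMulLog_nonneg h.1 h.2, (Real.negMulLog_le_one_sub_self h.1).trans (by linarith [h.1])⟩

lemma integrable_bdd {f : X → ℝ} (hf : AEStronglyMeasurable f μ)
    (h : ∀ᵐ x ∂μ, f x ∈ Icc (0 : ℝ) 1) : Integrable f μ :=
  Integrable.of_mem_Icc 0 1 hf.aemeasurable h

lemma integrable_nml {f : X → ℝ} (hf : AEStronglyMeasurable f μ)
    (h : ∀ᵐ x ∂μ, f x ∈ Icc (0 : ℝ) 1) : Integrable (fun x => Real.negMulLog (f x)) μ :=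
  integrable_bdd (Real.continuous_negMulLog.comp_aestronglyMeasurable hf)
    (h.mono fun _ hx => nml_mem hx)

lemma ce_sm (hF : F ≤ m0) (f : X → ℝ) :
    AEStronglyMeasurable (μ[f | F]) μ :=
  (stronglyMeasurable_condExp.mono hF).aestronglyMeasurable

lemma part_meas {ι : Type*} {p : X → ι} (hp : MeasurableSpace.comap p ⊤ ≤ m0) (s : Set ι) :
    MeasurableSet (p ⁻¹' s) := hp _ ⟨s, trivial, rfl⟩

/-- monotonicity in the conditioning -/
lemma cpe_mono (hFG : F ≤ G) (hG : G ≤ m0) {ι : Type*} [Fintype ι]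
    {p : X → ι} (hp : MeasurableSpace.comap p ⊤ ≤ m0) :
    condPartEntropy μ G p ≤ condPartEntropy μ F p := by
  have hF := hFG.trans hG
  refine Finset.sum_le_sum fun i _ => ?_
  have hs := part_meas hp {i}
  have hmG := ce_mem (μ := μ) hG hs
  have hmF := ce_mem (μ := μ) hF hs
  have hi := integrable_nml (ce_sm hG _) hmG
  have key := ConcaveOn.condExp_map_le (μ := μ) hF Real.concaveOn_negMulLog
    (Real.continuous_negMulLog.upperSemicontinuous.upperSemicontinuousOn _)
    (hmG.mono fun x hx => hx.1) isClosed_Ici integrable_condExp hi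
  have h2 : μ[μ[ind1 (p ⁻¹' {i}) | G] | F] =ᵐ[μ] μ[ind1 (p ⁻¹' {i}) | F] :=
    condExp_condExp_of_le hFG hG
  rw [← integral_condExp hF]
  refine integral_mono_ae integrable_condExp (integrable_nml (ce_sm hF _) hmF) ?_
  filter_upwards [key, h2] with x h1 h2
  rw [Function.comp_apply, h2] at h1
  exact h1

/-- Levy upward -/
lemma cpe_tendsto {F : ℕ → MeasurableSpace X} (hmono : Monotone F) (hF : ∀ n, F n ≤ m0)
    {ι : Type*} [Fintype ι]
    {p : X → ι} (hp : MeasurableSpace.comap p ⊤ ≤ m0) :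
    Tendsto (fun n => condPartEntropy μ (F n) p) atTop (𝓝 (condPartEntropy μ (⨆ n, F n) p)) := by
  refine tendsto_finsetSum _ fun i _ => ?_
  have hs := part_meas hp {i}
  refine tendsto_integral_of_dominated_convergence (fun _ => (1 : ℝ)) ?_ (integrable_const _) ?_ ?_
  · intro n
    exact Real.continuous_negMulLog.comp_aestronglyMeasurable (ce_sm (hF n) _)
  · intro n
    filter_upwards [ce_mem (μ := μ) (hF n) hs] with x hx
    rw [Real.norm_eq_abs, abs_of_nonneg (nml_mem hx).1]
    exact (nml_mem hx).2
  · let ℱ : Filtration ℕ m0 := ⟨F, hmono, hF⟩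
    filter_upwards [tendsto_ae_condExp (μ := μ) (ℱ := ℱ) (ind1 (p ⁻¹' {i}))] with x hx
    exact (Real.continuous_negMulLog.tendsto _).comp hx

lemma ce_shift (hF : F ≤ m0) {T : X → X} (hT : MeasurePreserving T μ μ)
    {f : X → ℝ} (hf : Integrable f μ) :
    μ[f ∘ T | MeasurableSpace.comap T F] =ᵐ[μ] (μ[f | F]) ∘ T := by
  have hm : MeasurableSpace.comap T F ≤ m0 :=
    (MeasurableSpace.comap_mono hF).trans hT.measurable.comap_le
  have hi : Integrable ((μ[f | F]) ∘ T) μ := hT.integrable_comp_of_integrable integrable_condExp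
  refine (ae_eq_condExp_of_forall_setIntegral_eq hm (hT.integrable_comp_of_integrable hf)
    (fun s _ _ => hi.integrableOn) ?_ ?_).symm
  · rintro s ⟨t, ht, rfl⟩ -
    have h1 : ∀ g : X → ℝ, AEStronglyMeasurable g μ →
        ∫ x in T ⁻¹' t, (g ∘ T) x ∂μ = ∫ x in t, g x ∂μ := by
      intro g hg
      have := setIntegral_map (μ := μ) (g := T) (f := g) (hF _ ht) (by rwa [hT.map_eq])
        hT.measurable.aemeasurable
      rw [hT.map_eq] at this
      exact this.symm
    rw [h1 _ (ce_sm hF _), h1 _ hf.aestronglyMeasurable, setIntegral_condExp hF hf ht]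
  · have : StronglyMeasurable[F] (μ[f | F]) := stronglyMeasurable_condExp
    exact (this.comp_measurable (comap_measurable T)).aestronglyMeasurable

lemma cpe_shift (hF : F ≤ m0) {T : X → X} (hT : MeasurePreserving T μ μ)
    {ι : Type*} [Fintype ι] {p : X → ι} (hp : MeasurableSpace.comap p ⊤ ≤ m0) :
    condPartEntropy μ (MeasurableSpace.comap T F) (p ∘ T) = condPartEntropy μ F p := by
  refine Finset.sum_congr rfl fun i _ => ?_
  have hs := part_meas hp {i}
  have h1 := ce_shift hF hT (integrable_ind1 (μ := μ) hs)
  have h2 : (∫ x, Real.negMulLog ((μ[ind1 (p ⁻¹' {i}) | F]) x) ∂μ) =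
      ∫ x, Real.negMulLog ((μ[ind1 (p ⁻¹' {i}) | F]) (T x)) ∂μ := by
    have := integral_map (μ := μ) (φ := T) hT.measurable.aemeasurable
      (f := fun x => Real.negMulLog ((μ[ind1 (p ⁻¹' {i}) | F]) x))
      (by rw [hT.map_eq]; exact Real.continuous_negMulLog.comp_aestronglyMeasurable (ce_sm hF _))
    rwa [hT.map_eq] at this
  rw [h2]
  refine integral_congr_ae ?_
  filter_upwards [h1] with x hx
  exact congrArg _ hx

lemma sup_part_set {ι : Type*} (p : X → ι) (i : ι) {s : Set X}
    (hs : MeasurableSet[MeasurableSpace.comap p ⊤ ⊔ F] s) :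
    ∃ t, MeasurableSet[F] t ∧ s ∩ p ⁻¹' {i} = t ∩ p ⁻¹' {i} := by
  let M : MeasurableSpace X :=
    { MeasurableSet' := fun s => ∃ t, MeasurableSet[F] t ∧ s ∩ p ⁻¹' {i} = t ∩ p ⁻¹' {i}
      measurableSet_empty := ⟨∅, @MeasurableSet.empty _ F, rfl⟩
      measurableSet_compl := by
        rintro s ⟨t, ht, h⟩
        refine ⟨tᶜ, @MeasurableSet.compl _ _ F ht, ?_⟩
        ext x
        have := congrArg (x ∈ ·) h
        simp only [mem_inter_iff, mem_compl_iff, eq_iff_iff] at this ⊢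
        tauto
      measurableSet_iUnion := by
        intro f hf
        choose t ht h using hf
        refine ⟨⋃ n, t n, @MeasurableSet.iUnion _ _ F _ _ ht, ?_⟩
        rw [iUnion_inter, iUnion_inter]
        exact iUnion_congr h }
  have : MeasurableSpace.comap p ⊤ ⊔ F ≤ M := by
    refine sup_le ?_ ?_
    · rintro s ⟨t, -, rfl⟩
      by_cases h : i ∈ t
      · refine ⟨univ, @MeasurableSet.univ _ F, ?_⟩
        ext x
        simp only [mem_inter_iff, mem_preimage, mem_singleton_iff, mem_univ, true_and,
          and_iff_right_iff_imp]
        rintro rfl; exact h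
      · refine ⟨∅, @MeasurableSet.empty _ F, ?_⟩
        ext x
        simp only [mem_inter_iff, mem_preimage, mem_singleton_iff, mem_empty_iff_false, false_and,
          iff_false, not_and]
        rintro h1 rfl; exact h h1
    · intro s hs
      exact ⟨s, hs, rfl⟩
  exact this _ hs

end Aux

section Chain

variable {X : Type*} {F G : MeasurableSpace X} [m0 : MeasurableSpace X] {μ : Measure X}
  [IsProbabilityMeasure μ]

lemma pull_int (hF : F ≤ m0) {s : Set X} (hs : MeasurableSet s) {h : X → ℝ}
    (hh : StronglyMeasurable[F] h) (hb : ∀ᵐ x ∂μ, h x ∈ Icc (0 : ℝ) 1) {t : Set X}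
    (ht : MeasurableSet[F] t) :
    ∫ x in t, s.indicator h x ∂μ = ∫ x in t, h x * (μ[ind1 s | F]) x ∂μ := by
  have hi : Integrable h μ := integrable_bdd (hh.mono hF).aestronglyMeasurable hb
  have e : s.indicator h = h * ind1 s := by
    ext x
    by_cases hx : x ∈ s <;> simp [ind1, hx]
  have hi2 : Integrable (h * ind1 s) μ := by
    rw [← e]; exact hi.indicator hs
  have := condExp_mul_of_stronglyMeasurable_left hh hi2 (integrable_ind1 (μ := μ) hs)
  rw [e, ← setIntegral_condExp hF hi2 ht]
  refine setIntegral_congr_ae (hF _ ht) ?_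
  filter_upwards [this] with x hx _
  exact hx

lemma ce_le (hF : F ≤ m0) {s t : Set X} (hs : MeasurableSet s) (ht : MeasurableSet t)
    (h : s ⊆ t) : ∀ᵐ x ∂μ, (μ[ind1 s | F]) x ≤ (μ[ind1 t | F]) x :=
  condExp_mono (integrable_ind1 hs) (integrable_ind1 ht)
    (Eventually.of_forall fun _ => indicator_le_indicator_of_subset h (fun _ => zero_le_one) _)

lemma ratio_mem (hF : F ≤ m0) {s t : Set X} (hs : MeasurableSet s) (ht : MeasurableSet t)
    (h : s ⊆ t) : ∀ᵐ x ∂μ, (μ[ind1 s | F]) x / (μ[ind1 t | F]) x ∈ Icc (0 : ℝ) 1 := by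
  filter_upwards [ce_mem (μ := μ) hF hs, ce_mem (μ := μ) hF ht, ce_le (μ := μ) hF hs ht h]
    with x h1 h2 h3
  exact ⟨div_nonneg h1.1 h2.1, div_le_one_of_le₀ h3 h2.1⟩

lemma ratio_sm (s t : Set X) :
    StronglyMeasurable[F] (fun x => (μ[ind1 s | F]) x / (μ[ind1 t | F]) x) := by
  have h1 : Measurable[F] (μ[ind1 s | F]) := stronglyMeasurable_condExp.measurable
  have h2 : Measurable[F] (μ[ind1 t | F]) := stronglyMeasurable_condExp.measurable
  exact (Measurable.div h1 h2).stronglyMeasurable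

lemma ratio_mul (hF : F ≤ m0) {s t : Set X} (hs : MeasurableSet s) (ht : MeasurableSet t)
    (h : s ⊆ t) : ∀ᵐ x ∂μ, (μ[ind1 s | F]) x / (μ[ind1 t | F]) x * (μ[ind1 t | F]) x =
      (μ[ind1 s | F]) x := by
  filter_upwards [ce_mem (μ := μ) hF hs, ce_le (μ := μ) hF hs ht h] with x h1 h3
  by_cases h0 : (μ[ind1 t | F]) x = 0
  · rw [h0, mul_zero]; exact le_antisymm h1.1 (h0 ▸ h3)
  · exact div_mul_cancel₀ _ h0

lemma ce_sup (hF : F ≤ m0) {ι κ : Type*} {p : X → ι} {q : X → κ}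
    (hp : MeasurableSpace.comap p ⊤ ≤ m0) (hq : MeasurableSpace.comap q ⊤ ≤ m0) {g : κ → ι}
    (hpq : p = g ∘ q) (j : κ) :
    μ[ind1 (q ⁻¹' {j}) | MeasurableSpace.comap p ⊤ ⊔ F] =ᵐ[μ]
      (p ⁻¹' {g j}).indicator
        (fun x => (μ[ind1 (q ⁻¹' {j}) | F]) x / (μ[ind1 (p ⁻¹' {g j}) | F]) x) := by
  have hs := part_meas hq {j}
  have ht := part_meas hp {g j}
  have hst : q ⁻¹' {j} ⊆ p ⁻¹' {g j} := by
    rintro x hx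
    simp only [mem_preimage, mem_singleton_iff] at hx
    simp [hpq, hx]
  have hm : MeasurableSpace.comap p ⊤ ⊔ F ≤ m0 := sup_le hp hF
  have hsm := ratio_sm (F := F) (μ := μ) (q ⁻¹' {j}) (p ⁻¹' {g j})
  have hb := ratio_mem (μ := μ) hF hs ht hst
  have hi := integrable_bdd (hsm.mono hF).aestronglyMeasurable hb
  have hi2 := hi.indicator ht
  refine (ae_eq_condExp_of_forall_setIntegral_eq hm (integrable_ind1 hs)
    (fun s _ _ => hi2.integrableOn) ?_ ?_).symm
  · intro A hA _
    obtain ⟨t, htF, hAt⟩ := sup_part_set p (g j) hA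
    have aux : ∀ f : X → ℝ, (∀ x, x ∉ p ⁻¹' {g j} → f x = 0) →
        ∫ x in A, f x ∂μ = ∫ x in t, f x ∂μ := by
      intro f hf
      have e : f = (p ⁻¹' {g j}).indicator f := by
        ext x
        by_cases hx : x ∈ p ⁻¹' {g j}
        · rw [indicator_of_mem hx]
        · rw [indicator_of_notMem hx, hf x hx]
      rw [e, setIntegral_indicator ht, setIntegral_indicator ht, hAt]
    rw [aux _ fun x hx => indicator_of_notMem hx _,
      aux _ fun x hx => indicator_of_notMem (fun h => hx (hst h)) _,
      pull_int hF ht hsm hb htF, ← setIntegral_condExp hF (integrable_ind1 hs) htF]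
    refine setIntegral_congr_ae (hF _ htF) ?_
    filter_upwards [ratio_mul (μ := μ) hF hs ht hst] with x hx _
    exact hx
  · have hsm' := hsm.mono (le_sup_right : F ≤ MeasurableSpace.comap p ⊤ ⊔ F)
    refine (StronglyMeasurable.indicator hsm' ?_).aestronglyMeasurable
    exact (le_sup_left : MeasurableSpace.comap p ⊤ ≤ MeasurableSpace.comap p ⊤ ⊔ F) _
      ⟨{g j}, trivial, rfl⟩

lemma ce_sum (hF : F ≤ m0) {ι κ : Type*} [Fintype κ] {p : X → ι} {q : X → κ}
    (hq : MeasurableSpace.comap q ⊤ ≤ m0) {g : κ → ι}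
    (hpq : p = g ∘ q) (i : ι) :
    ∀ᵐ x ∂μ, (μ[ind1 (p ⁻¹' {i}) | F]) x =
      ∑ j ∈ Finset.univ.filter (fun j => g j = i), (μ[ind1 (q ⁻¹' {j}) | F]) x := by
  have e : ind1 (p ⁻¹' {i}) =
      ∑ j ∈ Finset.univ.filter (fun j => g j = i), ind1 (q ⁻¹' {j}) := by
    ext x
    simp [ind1, hpq, indicator_apply, Finset.sum_ite_eq, eq_comm]
  have := condExp_finsetSum (μ := μ)
    (s := Finset.univ.filter (fun j => g j = i)) (f := fun j => ind1 (q ⁻¹' {j}))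
    (fun j _ => integrable_ind1 (part_meas hq {j})) F
  rw [e]
  filter_upwards [this] with x hx
  rw [hx, Finset.sum_apply]

lemma cpe_chain (hF : F ≤ m0) {ι κ : Type*} [Fintype ι] [Fintype κ] {p : X → ι} {q : X → κ}
    (hp : MeasurableSpace.comap p ⊤ ≤ m0) (hq : MeasurableSpace.comap q ⊤ ≤ m0) {g : κ → ι}
    (hpq : p = g ∘ q) :
    condPartEntropy μ F q = condPartEntropy μ F p +
      condPartEntropy μ (MeasurableSpace.comap p ⊤ ⊔ F) q := by
  have hst : ∀ j, q ⁻¹' {j} ⊆ p ⁻¹' {g j} := by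
    rintro j x hx
    simp only [mem_preimage, mem_singleton_iff] at hx
    simp [hpq, hx]
  have hs := fun j => part_meas hq {j}
  have ht := fun j => part_meas hp {j}
  have hb := fun j => ratio_mem (μ := μ) hF (hs j) (ht (g j)) (hst j)
  have hsm := fun j => ratio_sm (F := F) (μ := μ) (q ⁻¹' {j}) (p ⁻¹' {g j})
  have hphi : ∀ j, StronglyMeasurable[F] (fun x => Real.negMulLog
      ((μ[ind1 (q ⁻¹' {j}) | F]) x / (μ[ind1 (p ⁻¹' {g j}) | F]) x)) := fun j =>
    Real.continuous_negMulLog.comp_stronglyMeasurable (hsm j)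
  have hphib : ∀ j, ∀ᵐ x ∂μ, Real.negMulLog
      ((μ[ind1 (q ⁻¹' {j}) | F]) x / (μ[ind1 (p ⁻¹' {g j}) | F]) x) ∈ Icc (0 : ℝ) 1 := fun j =>
    (hb j).mono fun x hx => nml_mem hx
  have step : ∀ j, ∫ x, Real.negMulLog
      ((μ[ind1 (q ⁻¹' {j}) | MeasurableSpace.comap p ⊤ ⊔ F]) x) ∂μ =
      ∫ x, Real.negMulLog
        ((μ[ind1 (q ⁻¹' {j}) | F]) x / (μ[ind1 (p ⁻¹' {g j}) | F]) x) *
          (μ[ind1 (p ⁻¹' {g j}) | F]) x ∂μ := by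
    intro j
    have := pull_int hF (ht (g j)) (hphi j) (hphib j) (t := univ) (@MeasurableSet.univ _ F)
    rw [setIntegral_univ, setIntegral_univ] at this
    rw [← this]
    refine integral_congr_ae ?_
    filter_upwards [ce_sup hF hp hq hpq j] with x hx
    rw [hx]
    by_cases h : x ∈ p ⁻¹' {g j}
    · rw [indicator_of_mem h, indicator_of_mem h]
    · rw [indicator_of_notMem h, indicator_of_notMem h, Real.negMulLog_zero]
  have hint : ∀ j, Integrable (fun x => Real.negMulLog
        ((μ[ind1 (q ⁻¹' {j}) | F]) x / (μ[ind1 (p ⁻¹' {g j}) | F]) x) *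
          (μ[ind1 (p ⁻¹' {g j}) | F]) x) μ := by
    intro j
    refine integrable_bdd (((hphi j).mono hF).aestronglyMeasurable.mul (ce_sm hF _)) ?_
    filter_upwards [hphib j, ce_mem (μ := μ) hF (ht (g j))] with x h1 h2
    exact ⟨mul_nonneg h1.1 h2.1, mul_le_one₀ h1.2 h2.1 h2.2⟩
  have hintq : ∀ j, Integrable (fun x => Real.negMulLog ((μ[ind1 (q ⁻¹' {j}) | F]) x)) μ :=
    fun j => integrable_nml (ce_sm hF _) (ce_mem hF (hs j))
  have hintp : ∀ j, Integrable (fun x => Real.negMulLog ((μ[ind1 (p ⁻¹' {j}) | F]) x)) μ :=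
    fun j => integrable_nml (ce_sm hF _) (ce_mem hF (ht j))
  have e3 : condPartEntropy μ (MeasurableSpace.comap p ⊤ ⊔ F) q = _ :=
    Finset.sum_congr rfl fun j _ => step j
  rw [e3]
  unfold condPartEntropy
  rw [← integral_finsetSum _ fun j _ => hint j,
    ← integral_finsetSum _ fun j _ => hintp j, ← integral_finsetSum _ fun j _ => hintq j,
    ← integral_add (integrable_finsetSum _ fun j _ => hintp j)
      (integrable_finsetSum _ fun j _ => hint j)]
  refine integral_congr_ae ?_
  have hsum := ae_all_iff.2 fun i => ce_sum (μ := μ) hF hq hpq i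
  have hmul := ae_all_iff.2 fun j => ratio_mul (μ := μ) hF (hs j) (ht (g j)) (hst j)
  filter_upwards [hsum, hmul] with x h1 h2
  have h3 : ∀ j, Real.negMulLog ((μ[ind1 (q ⁻¹' {j}) | F]) x) =
      (μ[ind1 (p ⁻¹' {g j}) | F]) x * Real.negMulLog
        ((μ[ind1 (q ⁻¹' {j}) | F]) x / (μ[ind1 (p ⁻¹' {g j}) | F]) x) +
      -((μ[ind1 (q ⁻¹' {j}) | F]) x * Real.log ((μ[ind1 (p ⁻¹' {g j}) | F]) x)) := by
    intro j
    conv_lhs => rw [← h2 j, Real.negMulLog_mul]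
    congr 1
    conv_rhs => rw [← h2 j]
    rw [Real.negMulLog]
    ring
  have h4 : ∑ i, Real.negMulLog ((μ[ind1 (p ⁻¹' {i}) | F]) x) =
      ∑ j, -((μ[ind1 (q ⁻¹' {j}) | F]) x * Real.log ((μ[ind1 (p ⁻¹' {g j}) | F]) x)) := by
    rw [← Finset.sum_fiberwise Finset.univ g]
    refine Finset.sum_congr rfl fun i _ => ?_
    rw [Real.negMulLog, neg_mul, Finset.sum_neg_distrib]
    nth_rewrite 1 [h1 i]
    rw [Finset.sum_mul]
    congr 1
    refine Finset.sum_congr rfl fun j hj => ?_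
    rw [(Finset.mem_filter.1 hj).2]
  show ∑ j, Real.negMulLog ((μ[ind1 (q ⁻¹' {j}) | F]) x) = ∑ i, _ + _
  rw [Finset.sum_congr rfl fun j _ => h3 j, Finset.sum_add_distrib, ← h4, add_comm]
  congr 1
  exact Finset.sum_congr rfl fun j _ => mul_comm _ _

end Chain

section Shift

variable {X : Type*} {F G : MeasurableSpace X}

/-- sigma-algebra generated by the iterates of `p` with times in `I` -/
def sg (e : Equiv.Perm X) {ι : Type*} (p : X → ι) (I : Set ℤ) : MeasurableSpace X :=
  ⨆ i ∈ I, MeasurableSpace.comap (fun x => p ((e ^ i) x)) ⊤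

variable {e : Equiv.Perm X} {ι κ : Type*} {p : X → ι} {q : X → κ}

lemma sg_mono {I J : Set ℤ} (h : I ⊆ J) : sg e p I ≤ sg e p J := biSup_mono h

lemma sg_union (I J : Set ℤ) : sg e p (I ∪ J) = sg e p I ⊔ sg e p J := iSup_union

lemma sg_iUnion (I : ℕ → Set ℤ) : sg e p (⋃ n, I n) = ⨆ n, sg e p (I n) := iSup_iUnion _ _

lemma sg_single (i : ℤ) : sg e p {i} = MeasurableSpace.comap (fun x => p ((e ^ i) x)) ⊤ := by
  simp [sg]

lemma sg_comap (m : ℤ) (I : Set ℤ) :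
    MeasurableSpace.comap (⇑(e ^ m)) (sg e p I) = sg e p {i | i - m ∈ I} := by
  have h : ∀ i : ℤ, MeasurableSpace.comap (⇑(e ^ m))
      (MeasurableSpace.comap (fun x => p ((e ^ i) x)) ⊤) =
      MeasurableSpace.comap (fun x => p ((e ^ (i + m)) x)) ⊤ := by
    intro i
    rw [MeasurableSpace.comap_comp]
    congr 1
    ext x
    simp [zpow_add, Equiv.Perm.mul_apply]
  simp only [sg, MeasurableSpace.comap_iSup, h]
  refine le_antisymm (iSup₂_le fun i hi => ?_) (iSup₂_le fun i hi => ?_)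
  · exact le_iSup₂_of_le (i + m) (by simpa using hi) le_rfl
  · exact le_iSup₂_of_le (i - m) hi (by simp)

lemma sg_refine {g : κ → ι} (hpq : p = g ∘ q) (I : Set ℤ) : sg e p I ≤ sg e q I := by
  refine iSup₂_mono fun i _ => ?_
  rintro s ⟨t, -, rfl⟩
  exact ⟨g ⁻¹' t, trivial, by rw [hpq]; rfl⟩

/-- block partition -/
def blk (e : Equiv.Perm X) {ι : Type*} (p : X → ι) (n : ℕ) : X → (Fin n → ι) :=
  fun x i => p ((e ^ ((i : ℕ) : ℤ)) x)

lemma comap_pi_top [Finite ι] {n : ℕ} (f : X → (Fin n → ι)) :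
    MeasurableSpace.comap f ⊤ = ⨆ i, MeasurableSpace.comap (fun x => f x i) ⊤ := by
  refine le_antisymm ?_ (iSup_le fun i => ?_)
  · rintro s ⟨t, -, rfl⟩
    have : f ⁻¹' t = ⋃ y ∈ t, ⋂ i, (fun x => f x i) ⁻¹' {y i} := by
      ext x
      simp only [mem_preimage, mem_iUnion, mem_iInter, mem_singleton_iff, exists_prop]
      constructor
      · intro h; exact ⟨f x, h, fun _ => rfl⟩
      · rintro ⟨y, hy, h⟩
        rwa [show f x = y from funext h]
    rw [this]
    refine MeasurableSet.biUnion (Set.to_countable t) fun y _ => MeasurableSet.iInter fun i => ?_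
    exact (le_iSup (fun i => MeasurableSpace.comap (fun x => f x i) ⊤) i) _ ⟨_, trivial, rfl⟩
  · rintro s ⟨t, -, rfl⟩
    exact ⟨(fun y => y i) ⁻¹' t, trivial, rfl⟩

lemma blk_comap [Finite ι] (n : ℕ) :
    MeasurableSpace.comap (blk e p n) ⊤ = sg e p (Ico 0 (n : ℤ)) := by
  rw [comap_pi_top]
  refine le_antisymm (iSup_le fun i => ?_) (iSup₂_le fun i hi => ?_)
  · exact le_iSup₂_of_le ((i : ℕ) : ℤ) (by simp) le_rfl
  · obtain ⟨h0, hn⟩ := hi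
    lift i to ℕ using h0
    exact le_iSup_of_le ⟨i, by exact_mod_cast hn⟩ le_rfl

variable [m0 : MeasurableSpace X]

lemma sg_le (he : ∀ n : ℤ, Measurable (e ^ n)) (hp : MeasurableSpace.comap p ⊤ ≤ m0) (I : Set ℤ) :
    sg e p I ≤ m0 := by
  refine iSup₂_le fun i _ => ?_
  rintro s ⟨t, -, rfl⟩
  exact he i (part_meas hp t)

variable {μ : Measure X} [IsProbabilityMeasure μ]

lemma cpe_zero (hF : F ≤ m0) [Fintype ι] (hp : MeasurableSpace.comap p ⊤ ≤ F) :
    condPartEntropy μ F p = 0 := by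
  refine Finset.sum_eq_zero fun i _ => ?_
  have hs : MeasurableSet[F] (p ⁻¹' {i}) := hp _ ⟨{i}, trivial, rfl⟩
  have hsm : StronglyMeasurable[F] (ind1 (p ⁻¹' {i})) :=
    (@stronglyMeasurable_const _ _ F _ (1 : ℝ)).indicator hs
  have := condExp_of_stronglyMeasurable (μ := μ) hF hsm (integrable_ind1 (hF _ hs))
  rw [this]
  convert integral_zero X ℝ with x
  by_cases h : x ∈ p ⁻¹' {i} <;> simp [ind1, h]

lemma cpe_chain2 (hF : F ≤ m0) {ρ : Type*} [Fintype ι] [Fintype κ] [Fintype ρ] {r : X → ρ}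
    (hr : MeasurableSpace.comap r ⊤ ≤ m0) {g : ρ → ι} (hg : p = g ∘ r) {g' : ρ → κ}
    (hg' : q = g' ∘ r)
    (hpq : MeasurableSpace.comap r ⊤ ≤ MeasurableSpace.comap p ⊤ ⊔ MeasurableSpace.comap q ⊤) :
    condPartEntropy μ F r = condPartEntropy μ F p +
      condPartEntropy μ (MeasurableSpace.comap p ⊤ ⊔ F) q := by
  have hp : MeasurableSpace.comap p ⊤ ≤ m0 := by
    rintro s ⟨t, -, rfl⟩; rw [hg]; exact part_meas hr (g ⁻¹' t)
  have hq : MeasurableSpace.comap q ⊤ ≤ m0 := by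
    rintro s ⟨t, -, rfl⟩; rw [hg']; exact part_meas hr (g' ⁻¹' t)
  rw [cpe_chain hF hp hr hg, cpe_chain (sup_le hp hF) hq hr hg',
    cpe_zero (F := MeasurableSpace.comap q ⊤ ⊔ (MeasurableSpace.comap p ⊤ ⊔ F))
      (sup_le hq (sup_le hp hF)), add_zero]
  refine hpq.trans (sup_le (le_sup_left.trans le_sup_right) le_sup_left)

lemma blk_le [Finite ι] (he : ∀ n : ℤ, Measurable (e ^ n))
    (hp : MeasurableSpace.comap p ⊤ ≤ m0) (n : ℕ) :
    MeasurableSpace.comap (blk e p n) ⊤ ≤ m0 := blk_comap (e := e) (p := p) n ▸ sg_le he hp _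

lemma comap_comp_zpow {ρ : Type*} (r : X → ρ) (m : ℤ) :
    MeasurableSpace.comap (r ∘ ⇑(e ^ m)) ⊤ =
      MeasurableSpace.comap (⇑(e ^ m)) (MeasurableSpace.comap r ⊤) :=
  MeasurableSpace.comap_comp.symm

lemma comap_blk_shift [Finite ι] (n : ℕ) :
    MeasurableSpace.comap (blk e p n ∘ ⇑(e ^ (1 : ℤ))) ⊤ = sg e p (Ico 1 (n + 1 : ℤ)) := by
  rw [comap_comp_zpow, blk_comap, sg_comap]
  congr 1
  ext i
  simp only [mem_Ico, mem_setOf_eq]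
  omega

lemma chainL (he : ∀ n : ℤ, Measurable (e ^ n)) (hF : F ≤ m0) [Fintype κ]
    (hq : MeasurableSpace.comap q ⊤ ≤ m0) (n : ℕ) :
    condPartEntropy μ F (blk e q (n + 1)) =
      condPartEntropy μ F (blk e q n ∘ ⇑(e ^ (1 : ℤ))) +
        condPartEntropy μ (sg e q (Ico 1 (n + 1 : ℤ)) ⊔ F) q := by
  have := cpe_chain2 (μ := μ) (p := blk e q n ∘ ⇑(e ^ (1 : ℤ))) (q := q) (r := blk e q (n + 1))
    (g := fun y i => y i.succ) (g' := fun y => y 0) hF (blk_le he hq _) ?_ ?_ ?_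
  · rwa [comap_blk_shift] at this
  · ext x i
    simp only [blk, Function.comp_apply, Fin.val_succ, ← Equiv.Perm.mul_apply, ← zpow_add]
    push_cast
    rfl
  · ext x
    simp [blk]
  · rw [comap_blk_shift, blk_comap]
    have : MeasurableSpace.comap q ⊤ = sg e q {0} := by rw [sg_single]; simp
    rw [this, ← sg_union]
    refine sg_mono fun i hi => ?_
    simp only [mem_Ico, mem_union, mem_singleton_iff] at hi ⊢
    push_cast at hi
    omega

lemma chainR (he : ∀ n : ℤ, Measurable (e ^ n)) (hF : F ≤ m0) [Fintype κ]
    (hq : MeasurableSpace.comap q ⊤ ≤ m0) (n : ℕ) :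
    condPartEntropy μ F (blk e q (n + 1)) =
      condPartEntropy μ F (q ∘ ⇑(e ^ (n : ℤ))) +
        condPartEntropy μ (sg e q {(n : ℤ)} ⊔ F) (blk e q n) := by
  have hs : MeasurableSpace.comap (q ∘ ⇑(e ^ (n : ℤ))) ⊤ = sg e q {(n : ℤ)} := (sg_single _).symm
  have := cpe_chain2 (μ := μ) (p := q ∘ ⇑(e ^ (n : ℤ))) (q := blk e q n) (r := blk e q (n + 1))
    (g := fun y => y (Fin.last n)) (g' := fun y i => y i.castSucc) hF (blk_le he hq _) ?_ ?_ ?_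
  · rwa [hs] at this
  · ext x
    simp [blk]
  · ext x
    simp [blk]
  · rw [hs, blk_comap, blk_comap, ← sg_union]
    refine sg_mono fun i hi => ?_
    simp only [mem_Ico, mem_union, mem_singleton_iff] at hi ⊢
    push_cast at hi
    omega

lemma cpe_blk_zero (hF : F ≤ m0) [Fintype κ] : condPartEntropy μ F (blk e q 0) = 0 := by
  refine cpe_zero hF ?_
  rw [blk_comap]
  simp [sg]


lemma entropy_blk_sum (hμ : ∀ n : ℤ, MeasurePreserving (e ^ n) μ μ) [Fintype κ]
    (hq : MeasurableSpace.comap q ⊤ ≤ m0) (n : ℕ) :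
    condPartEntropy μ ⊥ (blk e q n) =
      ∑ i ∈ Finset.range n, condPartEntropy μ (sg e q (Ico 1 (i + 1 : ℤ))) q := by
  have he := fun n => (hμ n).measurable
  induction n with
  | zero => simpa using cpe_blk_zero bot_le
  | succ n ih =>
    rw [Finset.sum_range_succ, chainL he bot_le hq, ← ih, sup_bot_eq]
    congr 1
    have := cpe_shift (μ := μ) (F := ⊥) bot_le (hμ 1) (blk_le he hq n)
    rwa [MeasurableSpace.comap_bot] at this

lemma entropy_blk_past (hμ : ∀ n : ℤ, MeasurePreserving (e ^ n) μ μ) [Fintype κ]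
    (hq : MeasurableSpace.comap q ⊤ ≤ m0) (n : ℕ) :
    condPartEntropy μ (sg e q (Ici (n : ℤ))) (blk e q n) =
      n * condPartEntropy μ (sg e q (Ici 1)) q := by
  have he := fun n => (hμ n).measurable
  induction n with
  | zero => simpa using cpe_blk_zero (sg_le he hq _)
  | succ n ih =>
    rw [chainL he (sg_le he hq _) hq, ← sg_union]
    have := cpe_shift (μ := μ) (sg_le he hq (Ici (n : ℤ))) (hμ 1) (blk_le he hq n)
    rw [sg_comap, ih] at this
    have e1 : {i : ℤ | i - 1 ∈ Ici (n : ℤ)} = Ici ((n + 1 : ℕ) : ℤ) := by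
      ext i; simp only [mem_Ici, mem_setOf_eq]; push_cast; omega
    have e2 : Ico 1 (n + 1 : ℤ) ∪ Ici ((n + 1 : ℕ) : ℤ) = Ici 1 := by
      ext i; simp only [mem_Ici, mem_Ico, mem_union]; push_cast; omega
    rw [e1] at this
    rw [this, e2]
    push_cast; ring

lemma entropy_blk_rel (hμ : ∀ n : ℤ, MeasurePreserving (e ^ n) μ μ) [Fintype ι] [Fintype κ]
    (hp : MeasurableSpace.comap p ⊤ ≤ m0)
    (hq : MeasurableSpace.comap q ⊤ ≤ m0) {g : κ → ι} (hpq : p = g ∘ q) (n : ℕ) :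
    condPartEntropy μ (sg e p (Ico 0 (n : ℤ)) ⊔ sg e q (Ici (n : ℤ))) (blk e q n) =
      ∑ i ∈ Finset.range n, condPartEntropy μ (sg e p (Icc (-(i : ℤ)) 0) ⊔ sg e q (Ici 1)) q := by
  have he := fun n => (hμ n).measurable
  have hle := fun I J => sup_le (sg_le he hp I) (sg_le he hq J)
  induction n with
  | zero => simpa using cpe_blk_zero (hle _ _)
  | succ n ih =>
    rw [chainR he (hle _ _) hq, Finset.sum_range_succ, ← ih, add_comm]
    congr 1
    · congr 1
      have e1 : Ici (n : ℤ) = {(n : ℤ)} ∪ Ici ((n + 1 : ℕ) : ℤ) := by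
        ext i; simp only [mem_Ici, mem_union, mem_singleton_iff]; push_cast; omega
      have e2 : Ico 0 ((n + 1 : ℕ) : ℤ) = Ico 0 (n : ℤ) ∪ {(n : ℤ)} := by
        ext i; simp only [mem_Ico, mem_union, mem_singleton_iff]; push_cast; omega
      rw [e1, e2, sg_union, sg_union]
      have h3 := sg_refine (e := e) hpq {(n : ℤ)}
      refine le_antisymm ?_ ?_
      · refine sup_le (le_sup_left.trans le_sup_right) (sup_le (sup_le le_sup_left ?_) ?_)
        · exact h3.trans (le_sup_left.trans le_sup_right)
        · exact le_sup_right.trans le_sup_right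
      · refine sup_le ?_ (sup_le ?_ ?_)
        · exact le_sup_left.trans (le_sup_left.trans le_sup_right)
        · exact le_sup_left
        · exact le_sup_right.trans le_sup_right
    · have := cpe_shift (μ := μ) (hle (Icc (-(n : ℤ)) 0) (Ici 1)) (hμ n) hq
      rw [← this, MeasurableSpace.comap_sup, sg_comap, sg_comap]
      have e1 : {i : ℤ | i - n ∈ Ici (1 : ℤ)} = Ici ((n + 1 : ℕ) : ℤ) := by
        ext i; simp only [mem_Ici, mem_setOf_eq]; push_cast; omega
      have e2 : {i : ℤ | i - n ∈ Icc (-(n : ℤ)) 0} = Ico 0 ((n + 1 : ℕ) : ℤ) := by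
        ext i; simp only [mem_Icc, mem_Ico, mem_setOf_eq]; push_cast; omega
      rw [e1, e2]

lemma tendsto_past (hμ : ∀ n : ℤ, MeasurePreserving (e ^ n) μ μ) [Fintype κ]
    (hq : MeasurableSpace.comap q ⊤ ≤ m0) :
    Tendsto (fun i : ℕ => condPartEntropy μ (sg e q (Ico 1 (i + 1 : ℤ))) q) atTop
      (𝓝 (condPartEntropy μ (sg e q (Ici 1)) q)) := by
  have he := fun n => (hμ n).measurable
  have h := cpe_tendsto (μ := μ) (F := fun i : ℕ => sg e q (Ico 1 (i + 1 : ℤ)))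
    (fun i j hij => sg_mono (Ico_subset_Ico_right (by omega))) (fun i => sg_le he hq _) hq
  rw [← sg_iUnion] at h
  convert h using 4
  ext i
  simp only [mem_Ici, mem_iUnion, mem_Ico]
  constructor
  · intro hi; exact ⟨i.toNat, hi, by omega⟩
  · rintro ⟨_, h, _⟩; exact h

lemma tendsto_rel (hμ : ∀ n : ℤ, MeasurePreserving (e ^ n) μ μ) [Fintype ι] [Fintype κ]
    (hp : MeasurableSpace.comap p ⊤ ≤ m0)
    (hq : MeasurableSpace.comap q ⊤ ≤ m0) {g : κ → ι} (hpq : p = g ∘ q) :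
    Tendsto (fun i : ℕ => condPartEntropy μ (sg e p (Icc (-(i : ℤ)) 0) ⊔ sg e q (Ici 1)) q) atTop
      (𝓝 (condPartEntropy μ (sg e p univ ⊔ sg e q (Ici 1)) q)) := by
  have he := fun n => (hμ n).measurable
  have h := cpe_tendsto (μ := μ)
    (F := fun i : ℕ => sg e p (Icc (-(i : ℤ)) 0) ⊔ sg e q (Ici 1))
    (fun i j hij => sup_le_sup_right (sg_mono (Icc_subset_Icc_left (by omega))) _)
    (fun i => sup_le (sg_le he hp _) (sg_le he hq _)) hq
  rw [← iSup_sup, ← sg_iUnion] at h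
  have e1 : sg e p univ ⊔ sg e q (Ici 1) =
      sg e p (⋃ i : ℕ, Icc (-(i : ℤ)) 0) ⊔ sg e q (Ici 1) := by
    refine le_antisymm (sup_le ?_ le_sup_right) (sup_le_sup_right (sg_mono (subset_univ _)) _)
    have : (univ : Set ℤ) = (⋃ i : ℕ, Icc (-(i : ℤ)) 0) ∪ Ici 1 := by
      ext i
      simp only [mem_univ, mem_union, mem_iUnion, mem_Icc, mem_Ici, true_iff]
      by_cases hi : 1 ≤ i
      · exact Or.inr hi
      · exact Or.inl ⟨(-i).toNat, by omega, by omega⟩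
    rw [this, sg_union]
    exact sup_le_sup_left (sg_refine hpq _) _
  rwa [e1]

lemma pinsker (hμ : ∀ n : ℤ, MeasurePreserving (e ^ n) μ μ) [Fintype ι] [Fintype κ]
    (hp : MeasurableSpace.comap p ⊤ ≤ m0)
    (hq : MeasurableSpace.comap q ⊤ ≤ m0) {g : κ → ι} (hpq : p = g ∘ q) :
    condPartEntropy μ (sg e q (Ici 1)) q = condPartEntropy μ (sg e p (Ici 1)) p +
      condPartEntropy μ (sg e p univ ⊔ sg e q (Ici 1)) q := by
  have he := fun n => (hμ n).measurable
  have tq := (tendsto_past hμ hq).cesaro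
  have tp := (tendsto_past hμ hp).cesaro
  have tr := (tendsto_rel hμ hp hq hpq).cesaro
  simp only [← entropy_blk_sum hμ hp, ← entropy_blk_sum hμ hq, ← entropy_blk_rel hμ hp hq hpq]
    at tq tp tr
  have hblk : ∀ n, blk e p n = (fun y i => g (y i)) ∘ blk e q n := by
    intro n; ext x i; simp [blk, hpq]
  have hup : ∀ n : ℕ, condPartEntropy μ (sg e p (Ico 0 (n : ℤ)) ⊔ sg e q (Ici (n : ℤ))) (blk e q n) ≤
      condPartEntropy μ ⊥ (blk e q n) - condPartEntropy μ ⊥ (blk e p n) := by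
    intro n
    have h1 := cpe_chain (μ := μ) (F := ⊥) bot_le (blk_le he hp n) (blk_le he hq n) (hblk n)
    have h2 := cpe_mono (μ := μ) (F := sg e p (Ico 0 (n : ℤ)))
      (G := sg e p (Ico 0 (n : ℤ)) ⊔ sg e q (Ici (n : ℤ))) le_sup_left
      (sup_le (sg_le he hp _) (sg_le he hq _)) (blk_le he hq n)
    rw [sup_bot_eq, blk_comap] at h1
    linarith
  have hlo : ∀ n : ℕ, n * condPartEntropy μ (sg e q (Ici 1)) q - condPartEntropy μ ⊥ (blk e p n) ≤
      condPartEntropy μ (sg e p (Ico 0 (n : ℤ)) ⊔ sg e q (Ici (n : ℤ))) (blk e q n) := by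
    intro n
    have h1 := cpe_chain (μ := μ) (sg_le he hq (Ici (n : ℤ))) (blk_le he hp n) (blk_le he hq n)
      (hblk n)
    have h2 := cpe_mono (μ := μ) (F := ⊥) (G := sg e q (Ici (n : ℤ))) bot_le
      (sg_le he hq _) (blk_le he hp n)
    rw [entropy_blk_past hμ hq, blk_comap] at h1
    linarith
  have l1 := le_of_tendsto_of_tendsto' tr (tq.sub tp) (fun n => by
    rw [← mul_sub]; exact mul_le_mul_of_nonneg_left (hup n) (by positivity))
  have l2 := le_of_tendsto_of_tendsto
    ((tendsto_const_nhds (x := condPartEntropy μ (sg e q (Ici 1)) q)).sub tp) tr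
    (by
      filter_upwards [eventually_gt_atTop 0] with n hn
      have hn' : (n : ℝ) ≠ 0 := by positivity
      have := mul_le_mul_of_nonneg_left (hlo n) (by positivity : (0 : ℝ) ≤ (n : ℝ)⁻¹)
      rwa [mul_sub, inv_mul_cancel_left₀ hn'] at this)
  linarith

end Shift

section Final

variable {X : Type*}

lemma partPast_eq (e : Equiv.Perm X) {ι : Type*} (p : X → ι) :
    partPast (⇑e) p = sg e p (Ici 1) := by
  refine le_antisymm (iSup_le fun n => ?_) (iSup₂_le fun i hi => ?_)
  · refine le_iSup₂_of_le ((n + 1 : ℕ) : ℤ) (by simp) ?_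
    rw [Equiv.Perm.iterate_eq_pow, zpow_natCast]
  · obtain ⟨n, rfl⟩ : ∃ n : ℕ, i = ((n + 1 : ℕ) : ℤ) :=
      ⟨(i - 1).toNat, by have : 1 ≤ i := hi; omega⟩
    refine le_iSup_of_le n ?_
    rw [Equiv.Perm.iterate_eq_pow, zpow_natCast]

lemma partHull_eq (e : Equiv.Perm X) {ι : Type*} (p : X → ι) :
    partHull (⇑e) (⇑e.symm) p = sg e p univ := by
  have h1 : ∀ n : ℕ, (⇑e)^[n] = ⇑(e ^ (n : ℤ)) := fun n => by
    rw [Equiv.Perm.iterate_eq_pow, zpow_natCast]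
  have h2 : ∀ n : ℕ, (⇑e.symm)^[n] = ⇑(e ^ (-(n : ℤ))) := fun n => by
    rw [zpow_neg, zpow_natCast, ← inv_pow, ← Equiv.Perm.iterate_eq_pow]; rfl
  unfold partHull
  simp only [h1, h2]
  refine le_antisymm (iSup_le fun n => sup_le ?_ ?_) (iSup₂_le fun i _ => ?_)
  · exact le_iSup₂_of_le (n : ℤ) (mem_univ _) le_rfl
  · exact le_iSup₂_of_le (-(n : ℤ)) (mem_univ _) le_rfl
  · obtain ⟨n, rfl | rfl⟩ := i.eq_nat_or_neg
    · exact le_iSup_of_le n le_sup_left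
    · exact le_iSup_of_le n le_sup_right

lemma mp_zpow [m0 : MeasurableSpace X] {μ : Measure X} (T : X ≃ᵐ X)
    (hT : MeasurePreserving (⇑T) μ μ) (n : ℤ) :
    MeasurePreserving (⇑((T.toEquiv : Equiv.Perm X) ^ n)) μ μ := by
  obtain ⟨n, rfl | rfl⟩ := n.eq_nat_or_neg
  · rw [zpow_natCast, ← Equiv.Perm.iterate_eq_pow]
    exact hT.iterate n
  · rw [zpow_neg, zpow_natCast, ← inv_pow, ← Equiv.Perm.iterate_eq_pow]
    exact (hT.symm T).iterate n

lemma cpe_diff_le {F G : MeasurableSpace X} [m0 : MeasurableSpace X] {μ : Measure X}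
    [IsProbabilityMeasure μ] (hFG : F ≤ G) (hG : G ≤ m0) {ι κ : Type*} [Fintype ι] [Fintype κ]
    {p : X → ι} {q : X → κ} (hp : MeasurableSpace.comap p ⊤ ≤ m0)
    (hq : MeasurableSpace.comap q ⊤ ≤ m0) {g : κ → ι} (hpq : p = g ∘ q) :
    condPartEntropy μ F p - condPartEntropy μ G p ≤
      condPartEntropy μ F q - condPartEntropy μ G q := by
  have h1 := cpe_chain (μ := μ) (hFG.trans hG) hp hq hpq
  have h2 := cpe_chain (μ := μ) hG hp hq hpq
  have h3 := cpe_mono (μ := μ) (F := MeasurableSpace.comap p ⊤ ⊔ F)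
    (G := MeasurableSpace.comap p ⊤ ⊔ G) (sup_le_sup_left hFG _) (sup_le hp hG) hq
  linarith

lemma comap_top_le [m0 : MeasurableSpace X] {k : ℕ} {p : X → Fin k} (hp : Measurable p) :
    MeasurableSpace.comap p ⊤ ≤ m0 := by
  rintro s ⟨t, -, rfl⟩
  exact hp (MeasurableSet.of_discrete)

end Final

/-- Pinsker-type formulas: for finite partitions `P₁ ≺ P₂ ≺ ⋯ ≺ P_k`
(each refined by the next), (a)
`H(P₁|P₁⁻) − H(P₁|P₂⁻) = H(P₂|P₁ ∨ P₂⁻) − H(P₂|P₁ᵀ ∨ P₂⁻)`, and (b)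
`H(P₁|P₁⁻) − H(P₁|P_k⁻) ≤ Σ_{i=1}^{k-1} (H(P_i|P_i⁻) − H(P_i|P_{i+1}⁻))`. -/
theorem entropy_refinement_formulas
    {X : Type*} [m0 : MeasurableSpace X] [StandardBorelSpace X]
    (μ : Measure X) [IsProbabilityMeasure μ]
    (T : X ≃ᵐ X) (hT : MeasurePreserving (⇑T) μ μ) :
    (∀ (k₁ k₂ : ℕ) (p₁ : X → Fin k₁) (p₂ : X → Fin k₂),
      Measurable p₁ → Measurable p₂ → (∃ g : Fin k₂ → Fin k₁, p₁ = g ∘ p₂) →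
      condPartEntropy μ (partPast (⇑T) p₁) p₁ - condPartEntropy μ (partPast (⇑T) p₂) p₁ =
        condPartEntropy μ (MeasurableSpace.comap p₁ ⊤ ⊔ partPast (⇑T) p₂) p₂ -
          condPartEntropy μ (partHull (⇑T) (⇑T.symm) p₁ ⊔ partPast (⇑T) p₂) p₂) ∧
    (∀ (k : ℕ), 1 ≤ k → ∀ (m : ℕ → ℕ) (p : ∀ n : ℕ, X → Fin (m n)),
      (∀ i, i < k → Measurable (p i)) →
      (∀ i, i + 1 < k → ∃ g : Fin (m (i + 1)) → Fin (m i), p i = g ∘ p (i + 1)) →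
      condPartEntropy μ (partPast (⇑T) (p 0)) (p 0) -
          condPartEntropy μ (partPast (⇑T) (p (k - 1))) (p 0) ≤
        ∑ i ∈ Finset.range (k - 1),
          (condPartEntropy μ (partPast (⇑T) (p i)) (p i) -
            condPartEntropy μ (partPast (⇑T) (p (i + 1))) (p i))) := by
  have hμ := mp_zpow T hT
  have he := fun n => (hμ n).measurable
  have hpast : ∀ {k : ℕ} (p : X → Fin k), partPast (⇑T) p = sg T.toEquiv p (Ici 1) :=
    fun p => partPast_eq T.toEquiv p
  have hhull : ∀ {k : ℕ} (p : X → Fin k),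
      partHull (⇑T) (⇑T.symm) p = sg T.toEquiv p univ := fun p => partHull_eq T.toEquiv p
  refine ⟨?_, ?_⟩
  · rintro k₁ k₂ p₁ p₂ h₁ h₂ ⟨g, hg⟩
    have hp := comap_top_le h₁
    have hq := comap_top_le h₂
    rw [hpast, hpast, hhull]
    have h1 := pinsker hμ hp hq hg
    have h2 := cpe_chain (μ := μ) (sg_le he hq (Ici 1)) hp hq hg
    linarith
  · intro k _ m p hmeas href
    suffices H : ∀ j, j < k → (∃ g : Fin (m j) → Fin (m 0), p 0 = g ∘ p j) ∧
        condPartEntropy μ (partPast (⇑T) (p 0)) (p 0) -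
          condPartEntropy μ (partPast (⇑T) (p j)) (p 0) ≤
        ∑ i ∈ Finset.range j,
          (condPartEntropy μ (partPast (⇑T) (p i)) (p i) -
            condPartEntropy μ (partPast (⇑T) (p (i + 1))) (p i)) from (H (k - 1) (by omega)).2
    intro j
    induction j with
    | zero => intro _; exact ⟨⟨id, rfl⟩, by simp⟩
    | succ j ih =>
      intro hj
      obtain ⟨⟨g, hg⟩, ih⟩ := ih (by omega)
      obtain ⟨g', hg'⟩ := href j hj
      refine ⟨⟨g ∘ g', by rw [hg, hg']; rfl⟩, ?_⟩
      rw [Finset.sum_range_succ]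
      have hle : partPast (⇑T) (p j) ≤ partPast (⇑T) (p (j + 1)) := by
        rw [hpast, hpast]; exact sg_refine hg' _
      have hle0 : partPast (⇑T) (p (j + 1)) ≤ m0 := by
        rw [hpast]; exact sg_le he (comap_top_le (hmeas _ hj)) _
      have := cpe_diff_le (μ := μ) hle hle0 (comap_top_le (hmeas 0 (by omega)))
        (comap_top_le (hmeas j (by omega))) hg
      linarith
end
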